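/- arXiv:1912.11298 — 2 statements merged into one kernel-verified Lean document; each statement's English description precedes it below -/
import Mathlib

section
/- Let f ∈ L¹(ℝ) and suppose f̂(y) ≠ 0 for all y in a closed interval [a,b]. Then there exists a function g ∈ L¹(ℝ) such that f̂(y)·ĝ(y) = 1 for all y ∈ [a,b]. -/
open MeasureTheory Real
open scoped FourierTransform

/-!
If `f * e` is close in `L¹` to `c e`, then `u ↦ c u + (f * e - c e) * u` is invertible on `L¹` by
the Neumann series; a preimage `g` of `e` satisfies `𝓕 f * 𝓕 g = 1` wherever `𝓕 e = 1`.
To produce such an `e` near a frequency `s` with `c := 𝓕 f s ≠ 0`, zoom in at `s`: the rescaled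
functions with Fourier transforms `y ↦ 𝓕 f (s + r • y)` act as an approximate identity of mass `c`
when `r → 0`, so for small `r` any fixed `e` with `𝓕 e = 1` near `0` will do. Finally, local
inverses over two sets are glued by means of `1 - (1 - a b) (1 - a b') = a (b + b' - a b b')`, and
compactness concludes.
-/

open Filter Topology
open scoped ENNReal RealInnerProductSpace

section Translation

variable {G E : Type*} [AddCommGroup G] [TopologicalSpace G] [IsTopologicalAddGroup G]
  [MeasurableSpace G] [BorelSpace G] {μ : Measure G} [μ.IsAddRightInvariant]
  [NormedAddCommGroup E] [NormedSpace ℂ E] {p : ℝ≥0∞} [Fact (1 ≤ p)]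

/-- The translation operator `u ↦ u (· - t)` on `Lᵖ`, as a linear isometry. -/
noncomputable def translateLp (t : G) : Lp E p μ →ₗᵢ[ℂ] Lp E p μ :=
  Lp.compMeasurePreservingₗᵢ ℂ (· - t) (measurePreserving_sub_right μ t)

theorem coeFn_translateLp (t : G) (u : Lp E p μ) : translateLp t u =ᵐ[μ] fun x ↦ u (x - t) :=
  Lp.coeFn_compMeasurePreserving u (measurePreserving_sub_right μ t)

theorem translateLp_zero (u : Lp E p μ) : translateLp 0 u = u :=
  Lp.ext <| (coeFn_translateLp 0 u).trans <| by simp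

variable [IsLocallyFiniteMeasure μ] [μ.InnerRegularCompactLTTop] [Fact (p ≠ ∞)]

theorem continuous_translateLp (u : Lp E p μ) : Continuous fun t : G ↦ translateLp t u := by
  let sub : C(G, C(G, G)) := ContinuousMap.curry ⟨fun q ↦ q.2 - q.1, by fun_prop⟩
  exact continuous_const.compMeasurePreservingLp sub.continuous
    (measurePreserving_sub_right μ) Fact.out

variable [SecondCountableTopology G]

theorem integrable_smul_translateLp {f : G → ℂ} (hf : Integrable f μ) (u : Lp E p μ) :
    Integrable (fun t ↦ f t • translateLp t u) μ :=
  hf.smul_bdd ‖u‖ (continuous_translateLp u).aestronglyMeasurable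
    (.of_forall fun t ↦ ((translateLp t).norm_map u).le)

/-- Convolution with `f ∈ L¹` as a bounded operator on `Lᵖ`, given by the Bochner integral of the
translates of its argument with weight `f`. -/
noncomputable def convolutionLp (f : G →₁[μ] ℂ) : Lp E p μ →L[ℂ] Lp E p μ :=
  LinearMap.mkContinuous
    { toFun u := ∫ t, f t • translateLp t u ∂μ
      map_add' u v := by
        simp only [map_add, smul_add]
        exact integral_add (integrable_smul_translateLp (L1.integrable_coeFn f) u)
          (integrable_smul_translateLp (L1.integrable_coeFn f) v)
      map_smul' c u := by
        simp only [map_smul, smul_comm _ c, integral_smul, RingHom.id_apply] }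
    ‖f‖ fun u ↦ by
      refine (norm_integral_le_integral_norm _).trans_eq ?_
      simp only [norm_smul, LinearIsometry.norm_map, integral_mul_const, L1.norm_eq_integral_norm]

theorem convolutionLp_apply (f : G →₁[μ] ℂ) (u : Lp E p μ) :
    convolutionLp f u = ∫ t, f t • translateLp t u ∂μ :=
  rfl

theorem norm_convolutionLp_le (f : G →₁[μ] ℂ) :
    ‖(convolutionLp f : Lp E p μ →L[ℂ] Lp E p μ)‖ ≤ ‖f‖ :=
  LinearMap.mkContinuous_norm_le _ (norm_nonneg f) _

theorem convolutionLp_toL1 {f : G → ℂ} (hf : Integrable f μ) (u : Lp E p μ) :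
    convolutionLp (hf.toL1 f) u = ∫ t, f t • translateLp t u ∂μ :=
  integral_congr_ae <| hf.coeFn_toL1.mono fun t ht ↦ by simp only [ht]

end Translation

instance fact_one_ne_top_ennreal : Fact ((1 : ℝ≥0∞) ≠ ∞) := ⟨ENNReal.one_ne_top⟩

variable {V : Type*} [NormedAddCommGroup V] [InnerProductSpace ℝ V] [FiniteDimensional ℝ V]
  [MeasurableSpace V] [BorelSpace V] {E : Type*} [NormedAddCommGroup E] [NormedSpace ℂ E]

section FourierTransform

/-- The value at the frequency `y` of the Fourier transform on `L¹`, as a bounded operator. -/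
noncomputable def fourierEval (y : V) : (V →₁[volume] E) →L[ℂ] E :=
  (BoundedContinuousFunction.evalCLM ℂ y).comp (Lp.fourierTransformCLM V E)

theorem fourierEval_apply (y : V) (u : V →₁[volume] E) : fourierEval y u = 𝓕 (u : V → E) y :=
  rfl

theorem fourierEval_toL1 {f : V → E} (hf : Integrable f) (y : V) :
    fourierEval y (hf.toL1 f) = 𝓕 f y :=
  fourier_congr_ae hf.coeFn_toL1 y

theorem fourierEval_translateLp (y t : V) (u : V →₁[volume] E) :
    fourierEval y (translateLp t u) = 𝐞 (-⟪t, y⟫) • fourierEval y u := by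
  have h := congrFun
    (VectorFourier.fourierIntegral_comp_add_right 𝐞 volume (innerₗ V) (u : V → E) (-t)) y
  simp only [← sub_eq_add_neg, innerₗ_apply_apply, inner_neg_left] at h
  exact (fourier_congr_ae (coeFn_translateLp t u) y).trans h

theorem fourierEval_convolutionLp [CompleteSpace E] (y : V) (f : V →₁[volume] ℂ)
    (u : V →₁[volume] E) :
    fourierEval y (convolutionLp f u) = fourierEval y f • fourierEval y u := by
  calc fourierEval y (convolutionLp f u)
      = ∫ t, fourierEval y (f t • translateLp t u) := by
        rw [convolutionLp_apply, (fourierEval y).integral_comp_comm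
          (integrable_smul_translateLp (L1.integrable_coeFn f) u)]
    _ = ∫ t, (𝐞 (-⟪t, y⟫) • f t) • fourierEval y u := by
        congr 1 with t
        rw [map_smul, fourierEval_translateLp, smul_assoc, smul_comm]
    _ = fourierEval y f • fourierEval y u := integral_smul_const _ _

variable (V) in
theorem exists_fourierEval_eventually_eq_one :
    ∃ e : V →₁[volume] ℂ, ∀ᶠ y in 𝓝 0, fourierEval y e = 1 := by
  let b : ContDiffBump (0 : V) := default
  have hsupp : HasCompactSupport (Complex.ofReal ∘ b) := b.hasCompactSupport.comp_left rfl
  let ψ : SchwartzMap V ℂ := hsupp.toSchwartzMap (Complex.ofRealCLM.contDiff.comp b.contDiff)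
  refine ⟨(𝓕⁻ ψ).integrable.toL1 _, ?_⟩
  filter_upwards [b.eventuallyEq_one] with y hy
  rw [fourierEval_toL1, ← SchwartzMap.fourier_coe, FourierTransform.fourier_fourierInv_eq]
  exact (congrArg Complex.ofReal hy).trans Complex.ofReal_one

end FourierTransform

section FrequencyRescale

/-- The modulated dilate of `f` whose Fourier transform is `y ↦ 𝓕 f (s + r • y)`, for `r ≠ 0`. It
zooms in on the frequency `s` as `r → 0`. -/
noncomputable def frequencyRescale (f : V → E) (s : V) (r : ℝ) (x : V) : E :=
  |(r ^ Module.finrank ℝ V)⁻¹| • 𝐞 (-⟪r⁻¹ • x, s⟫) • f (r⁻¹ • x)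

theorem integrable_frequencyRescale {f : V → E} (hf : Integrable f) (s : V) {r : ℝ} (hr : r ≠ 0) :
    Integrable (frequencyRescale f s r) :=
  (((fourierIntegral_convergent_iff s).2 hf).comp_smul (inv_ne_zero hr)).smul _

theorem integral_abs_inv_smul_comp_inv_smul {F : Type*} [NormedAddCommGroup F] [NormedSpace ℝ F]
    (h : V → F) {r : ℝ} (hr : r ≠ 0) :
    ∫ x, |(r ^ Module.finrank ℝ V)⁻¹| • h (r⁻¹ • x) = ∫ x, h x := by
  rw [integral_smul, Measure.integral_comp_inv_smul, smul_smul, ← abs_mul,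
    inv_mul_cancel₀ (pow_ne_zero _ hr), abs_one, one_smul]

theorem fourier_frequencyRescale (f : V → E) (s : V) {r : ℝ} (hr : r ≠ 0) (y : V) :
    𝓕 (frequencyRescale f s r) y = 𝓕 f (s + r • y) := by
  rw [fourier_eq, fourier_eq,
    ← integral_abs_inv_smul_comp_inv_smul (fun x ↦ 𝐞 (-⟪x, s + r • y⟫) • f x) hr]
  congr 1 with x
  have hphase : -⟪x, y⟫ + -⟪r⁻¹ • x, s⟫ = -⟪r⁻¹ • x, s + r • y⟫ := by
    rw [inner_add_right, real_inner_smul_left x (r • y), real_inner_smul_right,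
      inv_mul_cancel_left₀ hr]
    ring
  rw [frequencyRescale, smul_comm, smul_smul, ← AddChar.map_add_eq_mul, hphase]

theorem tendsto_integral_frequencyRescale_smul_translateLp [CompleteSpace E] {p : ℝ≥0∞}
    [Fact (1 ≤ p)] [Fact (p ≠ ∞)] {f : V → ℂ} (hf : Integrable f) (s : V)
    (u : Lp E p (volume : Measure V)) :
    Tendsto (fun r : ℝ ↦ ∫ x, frequencyRescale f s r x • translateLp x u) (𝓝[≠] 0)
      (𝓝 (𝓕 f s • u)) := by
  have hfs : Integrable fun t ↦ 𝐞 (-⟪t, s⟫) • f t := (fourierIntegral_convergent_iff s).2 hf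
  have hcont : Continuous fun r : ℝ ↦ ∫ t, (𝐞 (-⟪t, s⟫) • f t) • translateLp (r • t) u := by
    refine continuous_of_dominated (bound := fun t ↦ ‖f t‖ * ‖u‖) (fun r ↦ ?_)
      (fun r ↦ .of_forall fun t ↦ ?_) (hf.norm.mul_const _) (.of_forall fun t ↦ ?_)
    · exact hfs.aestronglyMeasurable.smul
        ((continuous_translateLp u).comp (continuous_const_smul r)).aestronglyMeasurable
    · rw [norm_smul, Circle.norm_smul, LinearIsometry.norm_map]
    · have hline : Continuous fun r : ℝ ↦ r • t := by fun_prop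
      exact ((continuous_translateLp u).comp hline).const_smul (𝐞 (-⟪t, s⟫) • f t)
  have hlim := (hcont.continuousWithinAt (s := {0}ᶜ) (x := 0)).tendsto
  simp only [zero_smul, translateLp_zero, integral_smul_const, ← fourier_eq] at hlim
  refine hlim.congr' (eventually_mem_nhdsWithin.mono fun r hr ↦ ?_)
  rw [← integral_abs_inv_smul_comp_inv_smul _ hr]
  simp only [frequencyRescale, smul_inv_smul₀ hr, smul_assoc]

end FrequencyRescale

section LocalInverse

theorem exists_fourierEval_mul_eq_one_of_norm_sub_convolutionLp_lt {f e : V →₁[volume] ℂ} {c : ℂ}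
    (hlt : ‖c • e - convolutionLp f e‖ < ‖c‖) :
    ∃ g : V →₁[volume] ℂ, ∀ y, fourierEval y e = 1 → fourierEval y f * fourierEval y g = 1 := by
  set h := c • e - convolutionLp f e with h_def
  have hresolvent : c ∈ resolventSet ℂ
      (convolutionLp h : (V →₁[volume] ℂ) →L[ℂ] (V →₁[volume] ℂ)) :=
    spectrum.mem_resolventSet_of_norm_lt_mul <|
      (mul_le_of_le_one_right (norm_nonneg _) ContinuousLinearMap.norm_id_le).trans_lt <|
        (norm_convolutionLp_le h).trans_lt hlt
  obtain ⟨g, hg⟩ := (ContinuousLinearMap.isUnit_iff_bijective.1 hresolvent).surjective e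
  refine ⟨g, fun y hy ↦ ?_⟩
  have hgy : c * fourierEval y g - fourierEval y h * fourierEval y g = fourierEval y e := by
    simpa [Algebra.algebraMap_eq_smul_one, fourierEval_convolutionLp]
      using congrArg (fourierEval y) hg
  have hhy : fourierEval y h = c - fourierEval y f := by
    simp [h_def, fourierEval_convolutionLp, hy]
  linear_combination hgy + fourierEval y g * hhy + hy

/-- Local invertibility in the Wiener algebra: on the set `S`, the reciprocal of `𝓕 f` is the
Fourier transform of an integrable function. -/
def HasFourierInverseOn (f : V → ℂ) (S : Set V) : Prop :=
  ∃ g : V → ℂ, Integrable g ∧ ∀ y ∈ S, 𝓕 f y * 𝓕 g y = 1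

theorem HasFourierInverseOn.empty (f : V → ℂ) : HasFourierInverseOn f ∅ :=
  ⟨0, integrable_zero _ _ _, fun _ hy ↦ hy.elim⟩

theorem HasFourierInverseOn.mono {f : V → ℂ} {S T : Set V} (hT : HasFourierInverseOn f T)
    (hST : S ⊆ T) : HasFourierInverseOn f S := by
  obtain ⟨g, hg, hgT⟩ := hT
  exact ⟨g, hg, fun y hy ↦ hgT y (hST hy)⟩

theorem HasFourierInverseOn.union {f : V → ℂ} (hf : Integrable f) {S T : Set V}
    (hS : HasFourierInverseOn f S) (hT : HasFourierInverseOn f T) :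
    HasFourierInverseOn f (S ∪ T) := by
  obtain ⟨g, hg, hgS⟩ := hS
  obtain ⟨k, hk, hkT⟩ := hT
  let w := hg.toL1 g + hk.toL1 k - convolutionLp (hf.toL1 f) (convolutionLp (hg.toL1 g) (hk.toL1 k))
  refine ⟨w, L1.integrable_coeFn w, fun y hy ↦ ?_⟩
  have hw : 𝓕 (w : V → ℂ) y = 𝓕 g y + 𝓕 k y - 𝓕 f y * (𝓕 g y * 𝓕 k y) := by
    simp only [← fourierEval_apply, w, map_sub, map_add, fourierEval_convolutionLp,
      fourierEval_toL1, smul_eq_mul]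
  rw [hw]
  rcases hy with hy | hy
  · linear_combination (1 - 𝓕 f y * 𝓕 k y) * hgS y hy
  · linear_combination (1 - 𝓕 f y * 𝓕 g y) * hkT y hy

theorem exists_mem_nhds_hasFourierInverseOn {f : V → ℂ} (hf : Integrable f) {s : V}
    (hs : 𝓕 f s ≠ 0) : ∃ S ∈ 𝓝 s, HasFourierInverseOn f S := by
  obtain ⟨e, he⟩ := exists_fourierEval_eventually_eq_one V
  obtain ⟨r, hclose, hr⟩ : ∃ r : ℝ,
      ‖𝓕 f s • e - ∫ x, frequencyRescale f s r x • translateLp x e‖ < ‖𝓕 f s‖ ∧ r ≠ 0 := by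
    have hlim := ((tendsto_integral_frequencyRescale_smul_translateLp hf s e).const_sub
      (𝓕 f s • e)).norm
    rw [sub_self, norm_zero] at hlim
    exact ((hlim.eventually_lt_const (norm_pos_iff.2 hs)).and eventually_mem_nhdsWithin).exists
  have hF := integrable_frequencyRescale hf s hr
  rw [← convolutionLp_toL1 hF] at hclose
  obtain ⟨g, hg⟩ := exists_fourierEval_mul_eq_one_of_norm_sub_convolutionLp_lt hclose
  have hzoom : Tendsto (fun y ↦ -(r⁻¹ • s) + r⁻¹ • y) (𝓝 s) (𝓝 0) :=
    (by fun_prop : Continuous fun y ↦ -(r⁻¹ • s) + r⁻¹ • y).tendsto' _ _ (by simp)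
  refine ⟨_, hzoom.eventually he, frequencyRescale g (-(r⁻¹ • s)) r⁻¹,
    integrable_frequencyRescale (L1.integrable_coeFn g) _ (inv_ne_zero hr), fun y hy ↦ ?_⟩
  have hinv := hg _ hy
  rw [fourierEval_toL1, fourier_frequencyRescale f s hr, fourierEval_apply] at hinv
  rw [fourier_frequencyRescale _ _ (inv_ne_zero hr)]
  simpa [smul_smul, hr] using hinv

end LocalInverse

theorem local_wiener_general {f : V → ℂ} (hf : Integrable f) {K : Set V} (hK : IsCompact K)
    (hne : ∀ y ∈ K, 𝓕 f y ≠ 0) :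
    ∃ g : V → ℂ, Integrable g ∧ ∀ y ∈ K, 𝓕 f y * 𝓕 g y = 1 := by
  refine hK.induction_on (p := HasFourierInverseOn f) (.empty f) (fun S T hST hT ↦ hT.mono hST)
    (fun S T ↦ .union hf) fun s hs ↦ ?_
  obtain ⟨S, hSs, hS⟩ := exists_mem_nhds_hasFourierInverseOn hf (hne s hs)
  exact ⟨S, mem_nhdsWithin_of_mem_nhds hSs, hS⟩

/-- **Local Wiener Theorem.** If `f ∈ L¹(ℝ)` and its Fourier transform does not vanish on
a closed interval `[a, b]`, then there exists `g ∈ L¹(ℝ)` such that `𝓕 f (y) * 𝓕 g (y) = 1`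
for all `y ∈ [a, b]`. -/
theorem local_wiener
    (f : ℝ → ℂ) (hf : Integrable f) (a b : ℝ)
    (hne : ∀ y ∈ Set.Icc a b, 𝓕 f y ≠ 0) :
    ∃ g : ℝ → ℂ, Integrable g ∧ ∀ y ∈ Set.Icc a b, 𝓕 f y * 𝓕 g y = 1 :=
  local_wiener_general hf isCompact_Icc hne
end

section
/- Let K ⊂ ℂ be a compact set and let h be a real-analytic function on an open neighborhood of K (i.e. h is analytic as a function of the two real variables Re z, Im z). Then for every complex measure μ on ℝ^d of finite total variation without singular component (that is, μ = f dx + Σ_n a_n δ_{γ_n} with f ∈ L¹(ℝ^d), γ_n ∈ ℝ^d, Σ_n |a_n| < ∞) there exists a complex measure ν on ℝ^d of finite total variation, also without singular component, such that ν̂(y) = h(μ̂(y)) for every y ∈ ℝ^d with μ̂(y) ∈ K. -/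
open MeasureTheory Real Complex
open scoped RealInnerProductSpace FourierTransform

/-- The Fourier–Stieltjes transform of the measure `μ = f dx + Σ_n a_n δ_{γ_n}` on `ℝ^d`
(a measure of finite total variation without singular component):
`μ̂(y) = ∫ f(x) e^{-2πi⟨x,y⟩} dx + Σ_n a_n e^{-2πi⟨γ_n, y⟩}`. -/
noncomputable def measureFourier {d : ℕ} (f : EuclideanSpace ℝ (Fin d) → ℂ)
    (a : ℕ → ℂ) (γ : ℕ → EuclideanSpace ℝ (Fin d)) (y : EuclideanSpace ℝ (Fin d)) : ℂ :=
  𝓕 f y + ∑' n : ℕ, a n * Complex.exp (-2 * π * Complex.I * (⟪γ n, y⟫ : ℝ))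

/-!
Every transform `F = μ̂` is approximated, in the norm of the Banach algebra `A` of such transforms,
by `p + σ` with `p` a trigonometric polynomial and `σ` smooth of compact support. Smooth functions
operate on `x = Re (p + σ)`: the group `exp (itX)` generated by the element `X` of `A` with
transform `Re p` grows only polynomially, so Fourier inversion gives `φ (Re p) ∈ A`, while
`φ (Re p + Re σ) - φ (Re p)` is smooth with compact support. The same holds for imaginary parts.

Near a point `c ∈ K`, cut `Re F - Re c` off by a smooth function of `x`. The result has small
spectral radius: smooth functions operate on the cut-off of `x - Re c`, so its spectral radius is at
most its supremum, and the error is small in norm. Likewise for `Im F`. The power series of `h` at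
`c`, a double series in the real and imaginary parts, therefore converges in `A` at these elements
and represents `h ∘ F` wherever `F` is near `c`. As `K` is compact, finitely many of these local
representations, glued along their cut-offs `k`, `l` by means of `k + l - k l`, suffice.
-/

open scoped NNReal ENNReal ContDiff ComplexConjugate Topology

section BanachAlgebra

variable {A : Type*}

section SpectralRadius

variable [NormedRing A] [NormedAlgebra ℂ A] [CompleteSpace A]

lemma exists_norm_pow_le_of_spectralRadius_lt {X : A} {ρ : ℝ≥0} (hX : spectralRadius ℂ X < ρ) :
    ∃ C, ∀ n : ℕ, ‖X ^ n‖ ≤ C * (ρ : ℝ) ^ n := by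
  have hρ : 0 < ρ := ENNReal.coe_pos.1 (bot_le.trans_lt hX)
  have hroot : ∀ᶠ n : ℕ in Filter.atTop, ‖X ^ n‖₊ ≤ ρ ^ n := by
    filter_upwards [(spectrum.pow_nnnorm_pow_one_div_tendsto_nhds_spectralRadius
      X).eventually_lt_const hX, Filter.eventually_gt_atTop 0] with n hn hn0
    have hn0 : (0 : ℝ) < n := by exact_mod_cast hn0
    rw [one_div, ENNReal.rpow_inv_lt_iff hn0, ENNReal.rpow_natCast] at hn
    exact_mod_cast hn.le
  have hO : (fun n : ℕ => X ^ n) =O[Filter.atTop] fun n : ℕ => (ρ : ℝ) ^ n := by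
    refine Asymptotics.IsBigO.of_bound' (hroot.mono fun n hn => ?_)
    rw [Real.norm_of_nonneg (by positivity)]
    exact_mod_cast hn
  obtain ⟨C, -, hC⟩ := Asymptotics.bound_of_isBigO_nat_atTop hO
  refine ⟨C, fun n => (hC (by positivity)).trans_eq ?_⟩
  rw [Real.norm_of_nonneg (by positivity)]

end SpectralRadius

variable [NormedCommRing A] [NormedAlgebra ℂ A]

lemma spectralRadius_add_le [CompleteSpace A] (X Y : A) :
    spectralRadius ℂ (X + Y) ≤ spectralRadius ℂ X + spectralRadius ℂ Y := by
  refine iSup₂_le fun z hz => ?_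
  obtain ⟨χ, rfl⟩ := WeakDual.CharacterSpace.mem_spectrum_iff_exists.1 hz
  rw [map_add]
  refine (ENNReal.coe_le_coe.2 (nnnorm_add_le _ _)).trans ?_
  rw [ENNReal.coe_add]
  exact add_le_add (le_iSup₂_of_le _ (AlgHom.apply_mem_spectrum χ X) le_rfl)
    (le_iSup₂_of_le _ (AlgHom.apply_mem_spectrum χ Y) le_rfl)

section PowerSeries

variable {n : ℕ}

/-- The form `q (s + t i, …, s + t i)`, expanded by multilinearity as a homogeneous polynomial in
`s` and `t`, evaluated at the elements `X`, `Y` of a complex algebra. -/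
noncomputable def binaryFormEval (q : ContinuousMultilinearMap ℝ (fun _ : Fin n => ℂ) ℂ) (X Y : A) :
    A :=
  ∑ S : Finset (Fin n), q (S.piecewise 1 fun _ => I) • (X ^ S.card * Y ^ (n - S.card))

lemma norm_binaryFormEval_le (q : ContinuousMultilinearMap ℝ (fun _ : Fin n => ℂ) ℂ) {X Y : A}
    {C D ρ : ℝ} (hX : ∀ m : ℕ, ‖X ^ m‖ ≤ C * ρ ^ m) (hY : ∀ m : ℕ, ‖Y ^ m‖ ≤ D * ρ ^ m) :
    ‖binaryFormEval q X Y‖ ≤ C * D * (‖q‖ * (2 * ρ) ^ n) := by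
  have hterm (S : Finset (Fin n)) :
      ‖q (S.piecewise 1 fun _ => I) • (X ^ S.card * Y ^ (n - S.card))‖ ≤
        ‖q‖ * (C * D * ρ ^ n) := by
    have hq : ‖q (S.piecewise 1 fun _ => I)‖ ≤ ‖q‖ := by
      refine (q.le_opNorm _).trans_eq ?_
      rw [Finset.prod_eq_one, mul_one]
      intro i _
      by_cases hi : i ∈ S <;> simp [hi]
    have hS : S.card ≤ n := by simpa using S.card_le_univ
    calc _ ≤ ‖q‖ * ((C * ρ ^ S.card) * (D * ρ ^ (n - S.card))) := by
          refine (norm_smul_le _ _).trans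
            (mul_le_mul hq ((norm_mul_le _ _).trans ?_) (norm_nonneg _) (norm_nonneg _))
          exact mul_le_mul (hX _) (hY _) (norm_nonneg _) ((norm_nonneg _).trans (hX _))
      _ = ‖q‖ * (C * D * ρ ^ n) := by rw [← pow_mul_pow_sub ρ hS]; ring
  refine (norm_sum_le_of_le _ fun S _ => hterm S).trans_eq ?_
  simp only [Finset.sum_const, Finset.card_univ, Fintype.card_finset, Fintype.card_fin,
    nsmul_eq_mul, mul_pow]
  push_cast
  ring

lemma map_binaryFormEval (q : ContinuousMultilinearMap ℝ (fun _ : Fin n => ℂ) ℂ) {X Y : A}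
    (χ : A →ₐ[ℂ] ℂ) {s t : ℝ} (hX : χ X = s) (hY : χ Y = t) :
    χ (binaryFormEval q X Y) = q fun _ => s + t * I := by
  have hsplit : (fun _ : Fin n => (s + t * I : ℂ)) = (fun _ => s • (1 : ℂ)) + fun _ => t • I := by
    ext i; simp
  have hpiecewise (S : Finset (Fin n)) :
      q (S.piecewise (fun _ => s • (1 : ℂ)) fun _ => t • I) =
        (s ^ S.card * t ^ (n - S.card)) • q (S.piecewise 1 fun _ => I) := by
    have : (S.piecewise (fun _ => s • (1 : ℂ)) fun _ => t • I) =
        fun i => S.piecewise (fun _ => s) (fun _ => t) i •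
          S.piecewise (1 : Fin n → ℂ) (fun _ => I) i := by
      ext i
      by_cases hi : i ∈ S <;> simp [hi]
    rw [this, ContinuousMultilinearMap.map_smul_univ, Finset.prod_piecewise]
    simp [Finset.card_sdiff, Finset.card_univ]
  rw [binaryFormEval, map_sum, hsplit, ContinuousMultilinearMap.map_add_univ]
  refine Finset.sum_congr rfl fun S _ => ?_
  rw [hpiecewise, map_smul, map_mul, map_pow, map_pow, hX, hY, smul_eq_mul, Complex.real_smul]
  push_cast
  ring

variable [CompleteSpace A]

lemma exists_map_eq_tsum_of_spectralRadius_lt (p : FormalMultilinearSeries ℝ ℂ ℂ) {X Y : A}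
    {ρ : ℝ≥0} (hX : spectralRadius ℂ X < ρ) (hY : spectralRadius ℂ Y < ρ)
    (hρ : ((2 * ρ : ℝ≥0) : ℝ≥0∞) < p.radius) :
    ∃ H : A, ∀ (χ : A →ₐ[ℂ] ℂ) (s t : ℝ), χ X = s → χ Y = t →
      χ H = ∑' n, p n fun _ => s + t * I := by
  obtain ⟨C, hC⟩ := exists_norm_pow_le_of_spectralRadius_lt hX
  obtain ⟨D, hD⟩ := exists_norm_pow_le_of_spectralRadius_lt hY
  have hsum : Summable fun n => binaryFormEval (p n) X Y :=
    .of_norm_bounded ((p.summable_norm_mul_pow hρ).mul_left (C * D)) fun n =>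
      (norm_binaryFormEval_le (p n) hC hD).trans_eq (by push_cast; rfl)
  refine ⟨∑' n, binaryFormEval (p n) X Y, fun χ s t hs ht => ?_⟩
  rw [hsum.map_tsum χ (map_continuous χ)]
  exact tsum_congr fun n => map_binaryFormEval (p n) χ hs ht

end PowerSeries

lemma exists_map_eq_of_analyticAt [CompleteSpace A] {h : ℂ → ℂ} {c : ℂ} (hh : AnalyticAt ℝ h c) :
    ∃ δ : ℝ≥0, 0 < δ ∧ ∀ X Y : A, spectralRadius ℂ X < δ → spectralRadius ℂ Y < δ →
      ∃ H : A, ∀ (χ : A →ₐ[ℂ] ℂ) (s t : ℝ), χ X = s → χ Y = t → χ H = h (c + (s + t * I)) := by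
  obtain ⟨p, R, hp⟩ := hh
  obtain ⟨r, hr0, hrR⟩ := ENNReal.lt_iff_exists_nnreal_btwn.1 hp.r_pos
  have hr : 2 * (r / 2) = r := mul_div_cancel₀ r two_ne_zero
  refine ⟨r / 2, half_pos (ENNReal.coe_pos.1 hr0), fun X Y hX hY => ?_⟩
  obtain ⟨H, hH⟩ := exists_map_eq_tsum_of_spectralRadius_lt p hX hY
    (by rw [hr]; exact hrR.trans_le hp.r_le)
  refine ⟨H, fun χ s t hs ht => (hH χ s t hs ht).trans (hp.hasSum ?_).tsum_eq⟩
  have norm_lt {Z : A} (hZ : spectralRadius ℂ Z < (r / 2 : ℝ≥0)) : ‖χ Z‖₊ < r / 2 :=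
    ENNReal.coe_lt_coe.1 ((le_iSup₂_of_le _ (AlgHom.apply_mem_spectrum χ Z) le_rfl).trans_lt hZ)
  rw [Metric.mem_eball, edist_zero_right]
  refine lt_trans (ENNReal.coe_lt_coe.2 ?_) hrR
  calc ‖(s + t * I : ℂ)‖₊ ≤ ‖(s : ℂ)‖₊ + ‖(t : ℂ)‖₊ := by
        simpa [nnnorm_mul] using nnnorm_add_le (s : ℂ) (t * I)
    _ < r / 2 + r / 2 := add_lt_add (hs ▸ norm_lt hX) (ht ▸ norm_lt hY)
    _ = r := add_halves r

section FunctionalCalculus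

variable {Ω : Type*} (ι : A →ₐ[ℂ] (Ω → ℂ))

/-- Smooth functions operate on the real function `x` within the function algebra `ι A`. -/
def SmoothlyOperatesOn (x : Ω → ℝ) : Prop :=
  ∀ φ : ℝ → ℂ, ContDiff ℝ ∞ φ → ∃ X : A, ι X = φ ∘ x

/-- The real function `u` is a limit, in the norm of the function algebra `ι A`, of real functions
on which smooth functions operate. -/
def SmoothlyApproximable (u : Ω → ℝ) : Prop :=
  ∀ ε > 0, ∃ x, SmoothlyOperatesOn ι x ∧ ∃ X : A, ‖X‖ ≤ ε ∧ ι X = fun y => ((u y - x y : ℝ) : ℂ)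

variable {ι}

lemma SmoothlyOperatesOn.spectralRadius_le (hι : Function.Injective ι) {x : Ω → ℝ}
    (hx : SmoothlyOperatesOn ι x) {φ : ℝ → ℂ} (hφ : ContDiff ℝ ∞ φ) {r : ℝ≥0}
    (hr : ∀ t, ‖φ t‖₊ ≤ r) {X : A} (hX : ι X = φ ∘ x) : spectralRadius ℂ X ≤ r := by
  refine iSup₂_le fun z hz => ENNReal.coe_le_coe.2 (not_lt.1 fun hrz => hz ?_)
  have hne (t : ℝ) : z - φ t ≠ 0 := fun h => ((hr t).trans_lt hrz).ne (by rw [sub_eq_zero.1 h])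
  obtain ⟨Z, hZ⟩ := hx (fun t => (z - φ t)⁻¹) ((contDiff_const.sub hφ).inv hne)
  refine IsUnit.of_mul_eq_one Z (hι ?_)
  ext y
  simpa [hX, hZ] using mul_inv_cancel₀ (hne (x y))

lemma SmoothlyOperatesOn.exists_localization (hι : Function.Injective ι) {x : Ω → ℝ}
    (hx : SmoothlyOperatesOn ι x) (c : ℝ) {η : ℝ≥0} (hη : 0 < η) :
    ∃ k X : A, spectralRadius ℂ X ≤ (6 * η : ℝ≥0) ∧ (∀ y, |x y - c| ≤ 2 * η → ι k y = 1) ∧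
      ∀ y, ι k y ≠ 0 → ι X y = (x y - c : ℝ) := by
  replace hη : (0 : ℝ) < η := hη
  let inner : ContDiffBump (0 : ℝ) := ⟨2 * η, 3 * η, by positivity, by linarith⟩
  let outer : ContDiffBump (0 : ℝ) := ⟨3 * η, 6 * η, by positivity, by linarith⟩
  have hsub : ContDiff ℝ ∞ fun t : ℝ => t - c := by fun_prop
  let θ : ℝ → ℂ := fun t => (((t - c) * outer (t - c) : ℝ) : ℂ)
  have hθ : ContDiff ℝ ∞ θ :=
    Complex.ofRealCLM.contDiff.comp (hsub.mul (outer.contDiff.comp hsub))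
  have hθ_le (t : ℝ) : ‖θ t‖₊ ≤ 6 * η := by
    rw [← NNReal.coe_le_coe, coe_nnnorm, Complex.norm_real, norm_mul, Real.norm_eq_abs,
      Real.norm_of_nonneg outer.nonneg]
    by_cases ht : |t - c| ≤ 6 * η
    · exact (mul_le_mul ht outer.le_one outer.nonneg (by positivity)).trans_eq (mul_one _)
    · simp [outer.zero_of_le_dist (by simpa using (not_le.1 ht).le)]
  obtain ⟨k, hk⟩ := hx _ (Complex.ofRealCLM.contDiff.comp (inner.contDiff.comp hsub))
  obtain ⟨X, hX⟩ := hx θ hθ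
  refine ⟨k, X, hx.spectralRadius_le hι hθ hθ_le hX, fun y hy => ?_, fun y hy => ?_⟩
  · simp [hk, inner.one_of_mem_closedBall (x := x y - c) (by simpa using hy)]
  · have hxc : |x y - c| ≤ 3 * η := by
      by_contra! hlt
      exact hy (by simp [hk, inner.zero_of_le_dist (x := x y - c) (by simpa using hlt.le)])
    have houter : outer (x y - c) = 1 := outer.one_of_mem_closedBall (by simpa using hxc)
    simp [hX, θ, houter]

variable [NormOneClass A] [CompleteSpace A]

lemma norm_apply_le_norm (ι : A →ₐ[ℂ] (Ω → ℂ)) (X : A) (y : Ω) : ‖ι X y‖ ≤ ‖X‖ :=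
  AlgHom.norm_apply_le_self ((Pi.evalAlgHom ℂ (fun _ : Ω => ℂ) y).comp ι) X

lemma SmoothlyApproximable.exists_localization (hι : Function.Injective ι) {u : Ω → ℝ}
    (hu : SmoothlyApproximable ι u) (c : ℝ) {δ : ℝ≥0} (hδ : 0 < δ) :
    ∃ k X : A, spectralRadius ℂ X < δ ∧ (∀ y, |u y - c| ≤ δ / 8 → ι k y = 1) ∧
      ∀ y, ι k y ≠ 0 → ι X y = (u y - c : ℝ) := by
  obtain ⟨η, rfl⟩ : ∃ η, δ = 8 * η := ⟨δ / 8, (mul_div_cancel₀ _ (by norm_num)).symm⟩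
  replace hδ : 0 < η := pos_of_mul_pos_right hδ (by positivity)
  have hη : (0 : ℝ) < η := hδ
  obtain ⟨x, hx, X₁, hX₁, hux⟩ := hu η hη
  obtain ⟨k, X₀, hX₀, hk, hkX₀⟩ := hx.exists_localization hι c hδ
  refine ⟨k, X₀ + X₁, ?_, fun y hy => hk y ?_, fun y hy => ?_⟩
  · calc spectralRadius ℂ (X₀ + X₁) ≤ spectralRadius ℂ X₀ + spectralRadius ℂ X₁ :=
          spectralRadius_add_le _ _
      _ ≤ (6 * η : ℝ≥0) + η :=
          add_le_add hX₀ ((spectrum.spectralRadius_le_nnnorm X₁).trans (ENNReal.coe_le_coe.2 hX₁))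
      _ < (8 * η : ℝ≥0) := by
          rw [← ENNReal.coe_add, ENNReal.coe_lt_coe, ← NNReal.coe_lt_coe]
          push_cast
          linarith
  · have hux_le : |x y - u y| ≤ η := by
      rw [abs_sub_comm, ← Real.norm_eq_abs, ← Complex.norm_real, ← congrFun hux y]
      exact (norm_apply_le_norm ι X₁ y).trans hX₁
    push_cast at hy
    linarith [abs_sub_le (x y) (u y) c]
  · simp [hkX₀ y hy, hux]

variable {F : Ω → ℂ}

lemma exists_local_comp (hι : Function.Injective ι) (hre : SmoothlyApproximable ι fun y => (F y).re)
    (him : SmoothlyApproximable ι fun y => (F y).im) {h : ℂ → ℂ} {c : ℂ} (hh : AnalyticAt ℝ h c) :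
    ∃ t ∈ 𝓝 c, ∃ k G : A, (∀ y, F y ∈ t → ι k y = 1) ∧ ι G = ι k * h ∘ F := by
  obtain ⟨δ, hδ, hδH⟩ := exists_map_eq_of_analyticAt (A := A) hh
  obtain ⟨k₀, X, hX, hk₀, hkX⟩ := hre.exists_localization hι c.re hδ
  obtain ⟨k₁, Y, hY, hk₁, hkY⟩ := him.exists_localization hι c.im hδ
  obtain ⟨H, hH⟩ := hδH X Y hX hY
  refine ⟨_, Metric.closedBall_mem_nhds c (show (0 : ℝ) < δ / 8 by positivity), k₀ * k₁,
    k₀ * k₁ * H, fun y hy => ?_, ?_⟩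
  · rw [Metric.mem_closedBall, dist_eq_norm] at hy
    rw [map_mul, Pi.mul_apply, hk₀ y ((Complex.abs_re_le_norm (F y - c)).trans hy),
      hk₁ y ((Complex.abs_im_le_norm (F y - c)).trans hy), mul_one]
  · ext y
    rw [map_mul, Pi.mul_apply, Pi.mul_apply]
    rcases eq_or_ne (ι (k₀ * k₁) y) 0 with hk | hk
    · simp only [hk, zero_mul]
    · rw [map_mul, Pi.mul_apply, mul_ne_zero_iff] at hk
      have hHy : ι H y = h (c + ((F y).re - c.re : ℝ) + ((F y).im - c.im : ℝ) * I) := by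
        simpa [add_assoc] using hH ((Pi.evalAlgHom ℂ (fun _ : Ω => ℂ) y).comp ι) _ _
          (hkX y hk.1) (hkY y hk.2)
      rw [hHy, Function.comp_apply]
      congr 2
      apply Complex.ext <;> simp

lemma exists_map_eq_comp_of_isCompact (hι : Function.Injective ι)
    (hre : SmoothlyApproximable ι fun y => (F y).re)
    (him : SmoothlyApproximable ι fun y => (F y).im) {h : ℂ → ℂ} {K : Set ℂ} (hK : IsCompact K)
    (hh : AnalyticOnNhd ℝ h K) : ∃ H : A, ∀ y, F y ∈ K → ι H y = h (F y) := by
  obtain ⟨k, H, hk, hH⟩ : ∃ k G : A, (∀ y, F y ∈ K → ι k y = 1) ∧ ι G = ι k * h ∘ F := by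
    refine hK.induction_on ⟨0, 0, by simp, by simp⟩ ?_ ?_ fun c hc => ?_
    · exact fun S T hST ⟨k, G, hk, hG⟩ => ⟨k, G, fun y hy => hk y (hST hy), hG⟩
    · rintro S T ⟨k, G, hk, hG⟩ ⟨k', G', hk', hG'⟩
      refine ⟨k + k' - k * k', G + G' - k * G', fun y hy => ?_, ?_⟩
      · rcases hy with hy | hy
        · simp [hk y hy]
        · simp [hk' y hy]
      · simp only [map_sub, map_add, map_mul, hG, hG']
        ring
    · obtain ⟨t, ht, hkG⟩ := exists_local_comp hι hre him (hh c hc)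
      exact ⟨t, mem_nhdsWithin_of_mem_nhds ht, hkG⟩
  exact ⟨H, fun y hy => by simp [hH, hk y hy]⟩

end FunctionalCalculus

section ExponentialGrowth

/-- The one-parameter group `exp (t i X)` grows at most polynomially in the real parameter `t`.
Fourier inversion turns this into a functional calculus of smooth functions for `X`. -/
def HasPolynomialExpGrowth (X : A) : Prop :=
  ∃ (C : ℝ) (N : ℕ), ∀ t : ℝ, ‖NormedSpace.exp ((t * I : ℂ) • X)‖ ≤ C * (1 + |t|) ^ N

variable (A) in
lemma HasPolynomialExpGrowth.zero : HasPolynomialExpGrowth (0 : A) :=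
  ⟨‖(1 : A)‖, 0, fun t => by simp⟩

variable [CompleteSpace A]

lemma map_exp_smul (χ : A →ₐ[ℂ] ℂ) (c : ℂ) (X : A) :
    χ (NormedSpace.exp (c • X)) = Complex.exp (c * χ X) := by
  let _ : NormedAlgebra ℚ A := .restrictScalars ℚ ℂ A
  rw [NormedSpace.map_exp χ (map_continuous χ), map_smul, smul_eq_mul, Complex.exp_eq_exp_ℂ]

lemma HasPolynomialExpGrowth.add {X Y : A} (hX : HasPolynomialExpGrowth X)
    (hY : HasPolynomialExpGrowth Y) : HasPolynomialExpGrowth (X + Y) := by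
  let _ : NormedAlgebra ℚ A := .restrictScalars ℚ ℂ A
  obtain ⟨C, N, hC⟩ := hX
  obtain ⟨D, M, hD⟩ := hY
  refine ⟨C * D, N + M, fun t => ?_⟩
  rw [smul_add, NormedSpace.exp_add]
  calc _ ≤ C * (1 + |t|) ^ N * (D * (1 + |t|) ^ M) :=
        (norm_mul_le _ _).trans
          (mul_le_mul (hC t) (hD t) (norm_nonneg _) ((norm_nonneg _).trans (hC t)))
    _ = C * D * (1 + |t|) ^ (N + M) := by ring

lemma HasPolynomialExpGrowth.sum {α : Type*} (s : Finset α) {X : α → A}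
    (hX : ∀ i ∈ s, HasPolynomialExpGrowth (X i)) : HasPolynomialExpGrowth (∑ i ∈ s, X i) :=
  Finset.sum_induction X HasPolynomialExpGrowth (fun _ _ => .add) (.zero A) hX

lemma HasPolynomialExpGrowth.integrable_smul_exp {X : A} (hX : HasPolynomialExpGrowth X)
    (Φ : SchwartzMap ℝ ℂ) :
    Integrable fun t : ℝ => Φ t • NormedSpace.exp ((2 * π * t * I : ℂ) • X) := by
  let _ : NormedAlgebra ℚ A := .restrictScalars ℚ ℂ A
  obtain ⟨C, N, hC⟩ := hX
  have hdom : Integrable fun t : ℝ => C * (1 + |2 * π * t|) ^ N * ‖Φ t‖ := by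
    simp_rw [add_comm (1 : ℝ), add_pow, one_pow, mul_one, Finset.mul_sum, Finset.sum_mul]
    refine integrable_finsetSum _ fun k _ => ?_
    refine ((Φ.integrable_pow_mul volume k).const_mul
      (C * |2 * π| ^ k * N.choose k)).congr (.of_forall fun t => ?_)
    simp only [abs_mul, mul_pow, Real.norm_eq_abs]
    ring
  have hcont : Continuous fun t : ℝ => Φ t • NormedSpace.exp ((2 * π * t * I : ℂ) • X) :=
    Φ.continuous.smul (NormedSpace.exp_continuous.comp (by fun_prop))
  refine hdom.mono' hcont.aestronglyMeasurable (.of_forall fun t => ?_)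
  rw [mul_comm (C * _)]
  refine (norm_smul_le _ _).trans (mul_le_mul_of_nonneg_left ?_ (norm_nonneg _))
  simpa using hC (2 * π * t)

lemma HasPolynomialExpGrowth.exists_map_eq_schwartzMap {X : A} (hX : HasPolynomialExpGrowth X)
    (Ψ : SchwartzMap ℝ ℂ) :
    ∃ Z : A, ∀ (χ : A →ₐ[ℂ] ℂ) (s : ℝ), χ X = s → χ Z = Ψ s := by
  refine ⟨∫ t : ℝ, 𝓕 Ψ t • NormedSpace.exp ((2 * π * t * I : ℂ) • X), fun χ s hs => ?_⟩
  have hcomm := χ.toContinuousLinearMap.integral_comp_comm (hX.integrable_smul_exp (𝓕 Ψ))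
  calc χ (∫ t : ℝ, 𝓕 Ψ t • NormedSpace.exp ((2 * π * t * I : ℂ) • X))
      = ∫ t : ℝ, χ (𝓕 Ψ t • NormedSpace.exp ((2 * π * t * I : ℂ) • X)) := hcomm.symm
    _ = 𝓕⁻ ⇑(𝓕 Ψ : SchwartzMap ℝ ℂ) s := by
        rw [Real.fourierInv_eq']
        refine integral_congr_ae (.of_forall fun t => ?_)
        beta_reduce
        rw [map_smul, map_exp_smul, hs, smul_eq_mul, smul_eq_mul, mul_comm]
        simp only [RCLike.inner_apply, conj_trivial]
        push_cast
        ring_nf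
    _ = Ψ s := by
        rw [← SchwartzMap.fourierInv_coe, FourierTransform.fourierInv_fourier_eq]

lemma HasPolynomialExpGrowth.smoothlyOperatesOn [NormOneClass A] {Ω : Type*}
    {ι : A →ₐ[ℂ] (Ω → ℂ)} {X : A} (hX : HasPolynomialExpGrowth X) {x : Ω → ℝ}
    (hx : ι X = fun y => (x y : ℂ)) : SmoothlyOperatesOn ι x := by
  intro φ hφ
  let b : ContDiffBump (0 : ℝ) := ⟨‖X‖ + 1, ‖X‖ + 2, by positivity, by linarith⟩
  have hsupp : HasCompactSupport fun t => (b t : ℂ) * φ t :=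
    (b.hasCompactSupport.comp_left Complex.ofReal_zero).mul_right
  obtain ⟨Z, hZ⟩ := hX.exists_map_eq_schwartzMap
    (hsupp.toSchwartzMap ((Complex.ofRealCLM.contDiff.comp b.contDiff).mul hφ))
  refine ⟨Z, funext fun y => ?_⟩
  have hxy : |x y| ≤ ‖X‖ := by
    simpa [hx] using norm_apply_le_norm ι X y
  have hb : b (x y) = 1 := b.one_of_mem_closedBall (by
    rw [mem_closedBall_zero_iff]
    exact hxy.trans (by simp [b]))
  calc ι Z y = b (x y) * φ (x y) :=
        hZ ((Pi.evalAlgHom ℂ (fun _ : Ω => ℂ) y).comp ι) (x y) (congrFun hx y)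
    _ = φ (x y) := by simp [hb]

end ExponentialGrowth

section FourierCoefficients

lemma fourierCoeff_of_hasDerivAt {T : ℝ} [Fact (0 < T)] {f f' : AddCircle T → ℂ}
    (hf : ∀ x : ℝ, HasDerivAt (fun x : ℝ => f x) (f' x) x) (hf' : Continuous f') (n : ℤ) :
    fourierCoeff f' n = 2 * π * I * n / T * fourierCoeff f n := by
  have hparts := intervalIntegral.integral_mul_deriv_eq_deriv_mul (a := 0) (b := T)
    (fun x _ => hasDerivAt_fourier_neg T n x) (fun x _ => hf x)
    (((fourier (-n)).continuous.comp (AddCircle.continuous_mk' T)).const_mul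
      (-2 * π * I * n / T) |>.intervalIntegrable _ _)
    ((hf'.comp (AddCircle.continuous_mk' T)).intervalIntegrable _ _)
  simp only [fourierCoeff_eq_intervalIntegral _ n 0, zero_add, smul_eq_mul]
  rw [hparts, AddCircle.coe_period, QuotientAddGroup.mk_zero, sub_self, zero_sub,
    ← intervalIntegral.integral_neg, mul_smul_comm, ← intervalIntegral.integral_const_mul]
  congr 2
  ext x
  ring

lemma norm_fourierCoeff_le {T : ℝ} [Fact (0 < T)] {f : AddCircle T → ℂ} {M : ℝ}
    (hf : ∀ θ, ‖f θ‖ ≤ M) (n : ℤ) : ‖fourierCoeff f n‖ ≤ M := by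
  refine (norm_integral_le_of_norm_le_const (C := M) (.of_forall fun θ => ?_)).trans_eq (by simp)
  rw [norm_smul, fourier_apply, Circle.norm_coe, one_mul]
  exact hf θ

lemma norm_fourierCoeff_le_of_hasDerivAt_two {f f' f'' : UnitAddCircle → ℂ}
    (hf : ∀ x : ℝ, HasDerivAt (fun x : ℝ => f x) (f' x) x)
    (hf' : ∀ x : ℝ, HasDerivAt (fun x : ℝ => f' x) (f'' x) x)
    (hf'_cont : Continuous f') (hf''_cont : Continuous f'') {M₀ M₂ : ℝ}
    (hM₀ : ∀ θ, ‖f θ‖ ≤ M₀) (hM₂ : ∀ θ, ‖f'' θ‖ ≤ M₂) (n : ℤ) :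
    ‖fourierCoeff f n‖ ≤ (M₀ + M₂) * (1 / (1 + (n : ℝ) ^ 2)) := by
  have hn : ‖fourierCoeff f'' n‖ = (2 * π) ^ 2 * n ^ 2 * ‖fourierCoeff f n‖ := by
    rw [fourierCoeff_of_hasDerivAt hf' hf''_cont, fourierCoeff_of_hasDerivAt hf hf'_cont]
    simp only [ofReal_one, div_one, norm_mul, Complex.norm_ofNat, Complex.norm_real, norm_I,
      Complex.norm_intCast, Real.norm_of_nonneg pi_nonneg]
    linear_combination (2 * π) ^ 2 * ‖fourierCoeff f n‖ * sq_abs (n : ℝ)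
  have hpi : 1 ≤ (2 * π) ^ 2 := one_le_pow₀ (by linarith [Real.pi_gt_three])
  rw [mul_one_div, le_div_iff₀ (by positivity), mul_add, mul_one]
  refine add_le_add (norm_fourierCoeff_le hM₀ n) ((le_trans ?_ hn.ge).trans
    (norm_fourierCoeff_le hM₂ n))
  rw [mul_comm, mul_assoc]
  exact le_mul_of_one_le_left (by positivity) hpi

lemma norm_fourierCoeff_cexp_le {g g' g'' : UnitAddCircle → ℂ}
    (hg : ∀ x : ℝ, HasDerivAt (fun x : ℝ => g x) (g' x) x)
    (hg' : ∀ x : ℝ, HasDerivAt (fun x : ℝ => g' x) (g'' x) x) (hg_cont : Continuous g)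
    (hg'_cont : Continuous g') (hg''_cont : Continuous g'') (hre : ∀ θ, (g θ).re = 0) {M₁ M₂ : ℝ}
    (hM₁ : ∀ θ, ‖g' θ‖ ≤ M₁) (hM₂ : ∀ θ, ‖g'' θ‖ ≤ M₂) (n : ℤ) :
    ‖fourierCoeff (fun θ => cexp (g θ)) n‖ ≤ (1 + (M₁ ^ 2 + M₂)) * (1 / (1 + (n : ℝ) ^ 2)) := by
  have hexp (θ : UnitAddCircle) : ‖cexp (g θ)‖ = 1 := by rw [norm_exp, hre, Real.exp_zero]
  refine norm_fourierCoeff_le_of_hasDerivAt_two (f' := fun θ => cexp (g θ) * g' θ)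
    (f'' := fun θ => cexp (g θ) * g' θ * g' θ + cexp (g θ) * g'' θ)
    (fun x => (hg x).cexp) (fun x => (hg x).cexp.mul (hg' x)) (by fun_prop) (by fun_prop)
    (fun θ => (hexp θ).le) (fun θ => (norm_add_le _ _).trans ?_) n
  rw [norm_mul, norm_mul, norm_mul, hexp, one_mul, one_mul, sq]
  exact add_le_add (mul_self_le_mul_self (norm_nonneg _) (hM₁ θ)) (hM₂ θ)

lemma summable_one_div_one_add_int_sq : Summable fun n : ℤ => 1 / (1 + (n : ℝ) ^ 2) := by
  refine .of_norm_bounded_eventually (Real.summable_one_div_int_pow.2 one_lt_two) ?_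
  filter_upwards [(Set.finite_singleton (0 : ℤ)).compl_mem_cofinite] with n hn
  have hn0 : (n : ℝ) ≠ 0 := by exact_mod_cast hn
  rw [Real.norm_of_nonneg (by positivity)]
  exact one_div_le_one_div_of_le (by positivity) (by linarith)

lemma norm_fourierCoeff_cexp_trig_le (a : ℂ) (t : ℝ) (n : ℤ) :
    ‖fourierCoeff (fun θ : UnitAddCircle =>
      cexp (t * I * (a * fourier 1 θ + conj a * fourier (-1) θ))) n‖ ≤
      (1 + ((4 * π * ‖a‖ * |t|) ^ 2 + 8 * π ^ 2 * ‖a‖ * |t|)) * (1 / (1 + (n : ℝ) ^ 2)) := by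
  let trig (c p q : ℂ) (θ : UnitAddCircle) : ℂ := c * (p * fourier 1 θ + q * fourier (-1) θ)
  have hderiv (c p q : ℂ) (x : ℝ) :
      HasDerivAt (fun x : ℝ => trig c p q x) (trig (c * (2 * π * I)) p (-q) x) x := by
    refine ((((hasDerivAt_fourier 1 1 x).const_mul p).add
      ((hasDerivAt_fourier 1 (-1) x).const_mul q)).const_mul c).congr_deriv ?_
    push_cast
    ring
  have hnorm (c p q : ℂ) (θ : UnitAddCircle) :
      ‖trig c p q θ‖ ≤ ‖c‖ * (‖p‖ + ‖q‖) := by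
    rw [norm_mul]
    refine mul_le_mul_of_nonneg_left ((norm_add_le _ _).trans_eq ?_) (norm_nonneg c)
    simp only [norm_mul, fourier_apply, Circle.norm_coe, mul_one]
  refine norm_fourierCoeff_cexp_le (hderiv _ _ _) (hderiv _ _ _) (by fun_prop) (by fun_prop)
    (by fun_prop) (fun θ => ?_) (fun θ => (hnorm _ _ _ θ).trans_eq ?_)
    (fun θ => (hnorm _ _ _ θ).trans_eq ?_) n
  · simp only [trig]
    rw [fourier_neg, ← map_mul, Complex.add_conj, mul_right_comm, ← ofReal_mul, re_ofReal_mul, I_re,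
      mul_zero]
  · simp [abs_of_pos pi_pos]
    ring
  · simp [abs_of_pos pi_pos]
    ring

end FourierCoefficients

section PowerBoundedUnit

variable [CompleteSpace A]

lemma exists_map_eq_of_summable_fourierCoeff {T : ℝ} [Fact (0 < T)] {e : Aˣ}
    (he : ∀ n : ℤ, ‖((e ^ n : Aˣ) : A)‖ ≤ 1) {f : C(AddCircle T, ℂ)}
    (hf : Summable fun n => ‖fourierCoeff f n‖) :
    ∃ Z : A, ‖Z‖ ≤ ∑' n, ‖fourierCoeff f n‖ ∧
      ∀ (χ : A →ₐ[ℂ] ℂ) (θ : AddCircle T), χ e = θ.toCircle → χ Z = f θ := by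
  have hle (n : ℤ) : ‖fourierCoeff f n • ((e ^ n : Aˣ) : A)‖ ≤ ‖fourierCoeff f n‖ :=
    (norm_smul_le _ _).trans (mul_le_of_le_one_right (norm_nonneg _) (he n))
  have hsum : Summable fun n => fourierCoeff f n • ((e ^ n : Aˣ) : A) := .of_norm_bounded hf hle
  refine ⟨∑' n, fourierCoeff f n • ((e ^ n : Aˣ) : A), tsum_of_norm_bounded hf.hasSum hle,
    fun χ θ hθ => ?_⟩
  rw [hsum.map_tsum χ (map_continuous χ),
    ← (has_pointwise_sum_fourier_series_of_summable hf.of_norm θ).tsum_eq]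
  refine tsum_congr fun n => ?_
  have hχ : χ ((e ^ n : Aˣ) : A) = χ e ^ n :=
    (congrArg Units.val (map_zpow (Units.map (χ : A →* ℂ)) e n)).trans
      (Units.val_zpow_eq_zpow_val _ n)
  rw [map_smul, hχ, hθ, fourier_apply, AddCircle.toCircle_zsmul, Circle.coe_zpow]

lemma norm_zpow_le_one {R : Type*} [SeminormedRing R] [NormOneClass R] {e : Rˣ}
    (he : ‖(e : R)‖ ≤ 1) (he' : ‖(↑e⁻¹ : R)‖ ≤ 1) : ∀ n : ℤ, ‖((e ^ n : Rˣ) : R)‖ ≤ 1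
  | .ofNat n => by simpa using (norm_pow_le _ n).trans (pow_le_one₀ (norm_nonneg _) he)
  | .negSucc n => by
    rw [zpow_negSucc, ← inv_pow, Units.val_pow_eq_pow_val]
    exact (norm_pow_le _ _).trans (pow_le_one₀ (norm_nonneg _) he')

lemma exists_toCircle_eq_apply [NormOneClass A] {e : Aˣ} (he : ‖(e : A)‖ ≤ 1)
    (he' : ‖(↑e⁻¹ : A)‖ ≤ 1) (χ : A →ₐ[ℂ] ℂ) : ∃ θ : UnitAddCircle, χ e = θ.toCircle := by
  have hle : ‖χ e‖ ≤ 1 := (AlgHom.norm_apply_le_self χ _).trans he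
  have hle' : ‖χ ↑e⁻¹‖ ≤ 1 := (AlgHom.norm_apply_le_self χ _).trans he'
  have hmul : ‖χ e‖ * ‖χ ↑e⁻¹‖ = 1 := by
    rw [← norm_mul, ← map_mul, Units.mul_inv, map_one, norm_one]
  have hnorm : ‖χ e‖ = 1 := hle.antisymm (by nlinarith [norm_nonneg (χ e)])
  obtain ⟨θ, hθ⟩ := (AddCircle.homeomorphCircle one_ne_zero).surjective
    (⟨χ e, mem_sphere_zero_iff_norm.2 hnorm⟩ : Circle)
  refine ⟨θ, ?_⟩
  rw [← AddCircle.homeomorphCircle_apply one_ne_zero, hθ]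

lemma norm_exp_smul_add_inv_le [NormOneClass A] {Ω : Type*} {ι : A →ₐ[ℂ] (Ω → ℂ)}
    (hι : Function.Injective ι) {e : Aˣ} (he : ‖(e : A)‖ ≤ 1) (he' : ‖(↑e⁻¹ : A)‖ ≤ 1) {c a b : ℂ}
    (hsum : Summable fun n => ‖fourierCoeff (fun θ : UnitAddCircle =>
      cexp (c * (a * fourier 1 θ + b * fourier (-1) θ))) n‖) :
    ‖NormedSpace.exp (c • (a • (e : A) + b • (↑e⁻¹ : A)))‖ ≤
      ∑' n, ‖fourierCoeff (fun θ : UnitAddCircle =>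
        cexp (c * (a * fourier 1 θ + b * fourier (-1) θ))) n‖ := by
  let f : C(UnitAddCircle, ℂ) :=
    ⟨fun θ => cexp (c * (a * fourier 1 θ + b * fourier (-1) θ)), by fun_prop⟩
  obtain ⟨Z, hZ, hZf⟩ :=
    exists_map_eq_of_summable_fourierCoeff (f := f) (norm_zpow_le_one he he') hsum
  refine le_of_eq_of_le (congrArg norm (hι (funext fun y => ?_))) hZ
  let χ : A →ₐ[ℂ] ℂ := (Pi.evalAlgHom ℂ (fun _ : Ω => ℂ) y).comp ι
  obtain ⟨θ, hθ⟩ := exists_toCircle_eq_apply he he' χ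
  have hθ' : χ ↑e⁻¹ = fourier (-1) θ := by
    refine (congrArg Units.val (map_inv (Units.map (χ : A →* ℂ)) e)).trans ?_
    rw [Units.val_inv_eq_inv_val, Units.coe_map, MonoidHom.coe_coe, hθ, fourier_neg, fourier_one,
      ← Circle.coe_inv_eq_conj, Circle.coe_inv]
  calc χ (NormedSpace.exp (c • (a • (e : A) + b • (↑e⁻¹ : A)))) = f θ := by
        rw [map_exp_smul, map_add, map_smul, map_smul, hθ', hθ, ← fourier_one]
        rfl
    _ = χ Z := (hZf χ θ hθ).symm

lemma hasPolynomialExpGrowth_add_inv [NormOneClass A] {Ω : Type*} {ι : A →ₐ[ℂ] (Ω → ℂ)}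
    (hι : Function.Injective ι) {e : Aˣ} (he : ‖(e : A)‖ ≤ 1) (he' : ‖(↑e⁻¹ : A)‖ ≤ 1)
    (a : ℂ) : HasPolynomialExpGrowth (a • (e : A) + conj a • (↑e⁻¹ : A)) := by
  have hsum := summable_one_div_one_add_int_sq
  refine ⟨(1 + (4 * π * ‖a‖) ^ 2 + 8 * π ^ 2 * ‖a‖) * ∑' n : ℤ, 1 / (1 + (n : ℝ) ^ 2), 2,
    fun t => ?_⟩
  have hcoeff := norm_fourierCoeff_cexp_trig_le a t
  have hcoeff_sum := (hsum.mul_left _).of_nonneg_of_le (fun _ => norm_nonneg _) hcoeff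
  calc _ ≤ _ := norm_exp_smul_add_inv_le hι he he' hcoeff_sum
    _ ≤ (1 + ((4 * π * ‖a‖ * |t|) ^ 2 + 8 * π ^ 2 * ‖a‖ * |t|)) *
        ∑' n : ℤ, 1 / (1 + (n : ℝ) ^ 2) :=
      (hcoeff_sum.tsum_le_tsum hcoeff (hsum.mul_left _)).trans_eq tsum_mul_left
    _ ≤ (1 + (4 * π * ‖a‖) ^ 2 + 8 * π ^ 2 * ‖a‖) * (1 + |t|) ^ 2 *
        ∑' n : ℤ, 1 / (1 + (n : ℝ) ^ 2) := by
      refine mul_le_mul_of_nonneg_right ?_ (tsum_nonneg fun n => by positivity)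
      have ht : (1 + |t|) ^ 2 = 1 + 2 * |t| + |t| ^ 2 := by ring
      have hb : 0 ≤ 8 * π ^ 2 * ‖a‖ := by positivity
      have ht0 := abs_nonneg t
      rw [ht, mul_pow]
      nlinarith [mul_nonneg hb ht0, mul_nonneg hb (sq_nonneg |t|),
        mul_nonneg (sq_nonneg (4 * π * ‖a‖)) ht0]
    _ = _ := by ring

end PowerBoundedUnit

end BanachAlgebra

section AtomicAlgebra

variable {Y : Type*} {U : Submonoid (Y → Metric.closedBall (0 : ℂ) 1)}

variable (U) in
/-- `F` is a series `∑ cₙ uₙ` of functions `uₙ` in the monoid `U` with `∑ |cₙ| ≤ C`. -/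
def HasAtomicBound (F : Y → ℂ) (C : ℝ) : Prop :=
  ∃ (c : ℕ → ℂ) (u : ℕ → U), Summable (fun n => ‖c n‖) ∧ ∑' n, ‖c n‖ ≤ C ∧
    ∀ y, HasSum (fun n => c n * (u n).1 y) (F y)

lemma norm_mul_apply_le_norm (c : ℂ) (u : U) (y : Y) : ‖c * u.1 y‖ ≤ ‖c‖ := by
  rw [norm_mul]
  exact mul_le_of_le_one_right (norm_nonneg _) (mem_closedBall_zero_iff.1 (u.1 y).2)

lemma summable_mul_apply {β : Type*} {c : β → ℂ} (hc : Summable fun b => ‖c b‖) (u : β → U)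
    (y : Y) : Summable fun b => c b * ((u b).1 y : ℂ) :=
  .of_norm_bounded hc fun b => norm_mul_apply_le_norm (c b) (u b) y

namespace HasAtomicBound

variable {F G : Y → ℂ} {C D : ℝ}

lemma mono (hF : HasAtomicBound U F C) (hCD : C ≤ D) : HasAtomicBound U F D := by
  obtain ⟨c, u, hc, hC, hu⟩ := hF
  exact ⟨c, u, hc, hC.trans hCD, hu⟩

lemma of_hasSum {β : Type*} [Countable β] {c : β → ℂ} {u : β → U} (hc : Summable fun b => ‖c b‖)
    (hu : ∀ y, HasSum (fun b => c b * (u b).1 y) (F y)) : HasAtomicBound U F (∑' b, ‖c b‖) := by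
  obtain ⟨e, he⟩ := exists_injective_nat β
  have hzero : ∀ n ∉ Set.range e, Function.extend e c 0 n = 0 :=
    Function.extend_apply' c (0 : ℕ → ℂ)
  have hnorm : (fun n => ‖Function.extend e c 0 n‖) ∘ e = fun b => ‖c b‖ := by
    ext b
    simp [he.extend_apply]
  refine ⟨Function.extend e c 0, Function.extend e u 1, ?_, le_of_eq ?_, fun y => ?_⟩
  · rwa [← he.summable_iff fun n hn => by rw [hzero n hn, norm_zero], hnorm]
  · rw [← he.tsum_eq (Function.support_subset_iff'.2 fun n hn => by
      rw [hzero n hn, norm_zero])]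
    exact tsum_congr fun b => congrFun hnorm b
  · rw [← he.hasSum_iff fun n hn => by rw [hzero n hn, zero_mul]]
    simpa [Function.comp_def, he.extend_apply] using hu y

lemma of_mem (u : U) (c : ℂ) : HasAtomicBound U (fun y => c * u.1 y) ‖c‖ := by
  simpa using of_hasSum (β := Unit) (c := fun _ => c) (u := fun _ => u) (hasSum_fintype _).summable
    fun y => hasSum_unique fun _ : Unit => c * (u.1 y : ℂ)

variable (U) in
lemma const (c : ℂ) : HasAtomicBound U (fun _ => c) ‖c‖ := by
  simpa using of_mem (1 : U) c

lemma norm_le (hF : HasAtomicBound U F C) (y : Y) : ‖F y‖ ≤ C := by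
  obtain ⟨c, u, hc, hC, hu⟩ := hF
  rw [← (hu y).tsum_eq]
  exact (tsum_of_norm_bounded hc.hasSum fun n => norm_mul_apply_le_norm (c n) (u n) y).trans hC

lemma nonneg (hF : HasAtomicBound U F C) : 0 ≤ C := by
  obtain ⟨c, u, -, hC, -⟩ := hF
  exact (tsum_nonneg fun n => norm_nonneg (c n)).trans hC

lemma const_mul (hF : HasAtomicBound U F C) (a : ℂ) :
    HasAtomicBound U (fun y => a * F y) (‖a‖ * C) := by
  obtain ⟨c, u, hc, hC, hu⟩ := hF
  refine ⟨fun n => a * c n, u, ?_, ?_, fun y => ?_⟩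
  · simpa only [norm_mul] using hc.mul_left ‖a‖
  · simpa only [norm_mul, tsum_mul_left] using mul_le_mul_of_nonneg_left hC (norm_nonneg a)
  · simpa only [mul_assoc] using (hu y).mul_left a

lemma tsum {F : ℕ → Y → ℂ} {C : ℕ → ℝ} (hF : ∀ k, HasAtomicBound U (F k) (C k))
    (hC : Summable C) : HasAtomicBound U (fun y => ∑' k, F k y) (∑' k, C k) := by
  choose c u hc hcC hu using hF
  have hsum : Summable fun k => ∑' n, ‖c k n‖ :=
    hC.of_nonneg_of_le (fun k => tsum_nonneg fun n => norm_nonneg (c k n)) hcC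
  have hprod : Summable fun p : ℕ × ℕ => ‖c p.1 p.2‖ :=
    (summable_prod_of_nonneg fun _ => norm_nonneg _).2 ⟨hc, hsum⟩
  refine (of_hasSum (u := fun p : ℕ × ℕ => u p.1 p.2) hprod fun y => ?_).mono ?_
  · have hy := (summable_mul_apply hprod (fun p => u p.1 p.2) y).hasSum
    rwa [(hy.prod_fiberwise fun k => hu k y).tsum_eq]
  · rw [hprod.tsum_prod]
    exact hsum.tsum_le_tsum hcC hC

lemma add (hF : HasAtomicBound U F C) (hG : HasAtomicBound U G D) :
    HasAtomicBound U (fun y => F y + G y) (C + D) := by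
  obtain ⟨c, u, hc, hC, hu⟩ := hF
  obtain ⟨c', u', hc', hD, hu'⟩ := hG
  have hsum : HasSum (fun p => ‖Sum.elim c c' p‖) (∑' n, ‖c n‖ + ∑' n, ‖c' n‖) :=
    .sum (by simpa [Function.comp_def] using hc.hasSum)
      (by simpa [Function.comp_def] using hc'.hasSum)
  refine (of_hasSum (c := Sum.elim c c') (u := Sum.elim u u') hsum.summable fun y => ?_).mono ?_
  · exact .sum (by simpa [Function.comp_def] using hu y) (by simpa [Function.comp_def] using hu' y)
  · rw [hsum.tsum_eq]
    exact add_le_add hC hD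

lemma mul (hF : HasAtomicBound U F C) (hG : HasAtomicBound U G D) :
    HasAtomicBound U (fun y => F y * G y) (C * D) := by
  have hC0 := hF.nonneg
  obtain ⟨c, u, hc, hC, hu⟩ := hF
  obtain ⟨c', u', hc', hD, hu'⟩ := hG
  refine (of_hasSum (u := fun p : ℕ × ℕ => u p.1 * u' p.2) (hc.mul_norm hc') fun y => ?_).mono ?_
  · have hy := (summable_mul_apply (hc.mul_norm hc') (fun p => u p.1 * u' p.2) y).hasSum
    simp only [Submonoid.coe_mul, Pi.mul_apply, Metric.unitClosedBall.coe_mul,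
      mul_mul_mul_comm _ (c' _)] at hy ⊢
    rwa [(hu y).mul_eq (hu' y) hy]
  · simp only [norm_mul]
    rw [← hc.tsum_mul_tsum hc' (by simpa only [norm_mul] using hc.mul_norm hc')]
    exact mul_le_mul hC hD (tsum_nonneg fun n => norm_nonneg (c' n)) hC0

end HasAtomicBound

variable (U) in
/-- The infimum of `∑ |cₙ|` over all series `∑ cₙ uₙ` of functions `uₙ` in `U` representing `F`;
it is meaningful only if there is such a series. -/
noncomputable def atomicNorm (F : Y → ℂ) : ℝ :=
  sInf {C | HasAtomicBound U F C}

namespace HasAtomicBound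

variable {F G : Y → ℂ} {C D : ℝ}

lemma atomicNorm_le (hF : HasAtomicBound U F C) : atomicNorm U F ≤ C :=
  csInf_le ⟨0, fun _ hC => nonneg hC⟩ hF

lemma of_atomicNorm_lt (hF : HasAtomicBound U F C) (hD : atomicNorm U F < D) :
    HasAtomicBound U F D := by
  obtain ⟨E, hE, hED⟩ := exists_lt_of_csInf_lt ⟨C, hF⟩ hD
  exact mono hE hED.le

lemma self (hF : HasAtomicBound U F C) {ε : ℝ} (hε : 0 < ε) :
    HasAtomicBound U F (atomicNorm U F + ε) :=
  hF.of_atomicNorm_lt (lt_add_of_pos_right _ hε)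

lemma norm_le_atomicNorm (hF : HasAtomicBound U F C) (y : Y) : ‖F y‖ ≤ atomicNorm U F :=
  le_of_forall_gt_imp_ge_of_dense fun _ hD => (hF.of_atomicNorm_lt hD).norm_le y

lemma atomicNorm_add_le (hF : HasAtomicBound U F C) (hG : HasAtomicBound U G D) :
    atomicNorm U (F + G) ≤ atomicNorm U F + atomicNorm U G :=
  le_of_forall_pos_le_add fun ε hε =>
    ((hF.self (half_pos hε)).add (hG.self (half_pos hε))).atomicNorm_le.trans (by linarith)

lemma atomicNorm_nonneg (hF : HasAtomicBound U F C) : 0 ≤ atomicNorm U F :=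
  le_csInf ⟨C, hF⟩ fun _ hD => nonneg hD

lemma atomicNorm_mul_le (hF : HasAtomicBound U F C) (hG : HasAtomicBound U G D) :
    atomicNorm U (F * G) ≤ atomicNorm U F * atomicNorm U G :=
  le_mul_of_forall_lt₀ fun _ hC _ hD =>
    ((hF.of_atomicNorm_lt hC).mul (hG.of_atomicNorm_lt hD)).atomicNorm_le

lemma atomicNorm_smul_le (hF : HasAtomicBound U F C) (a : ℂ) :
    atomicNorm U (a • F) ≤ ‖a‖ * atomicNorm U F :=
  le_mul_of_forall_lt₀ fun _ hb _ hC =>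
    ((hF.of_atomicNorm_lt hC).const_mul a).atomicNorm_le.trans
      (mul_le_mul_of_nonneg_right hb.le (hF.atomicNorm_nonneg.trans hC.le))

end HasAtomicBound

variable (U) in
/-- The algebra of all absolutely convergent series of functions in `U`. -/
def atomicSubalgebra : Subalgebra ℂ (Y → ℂ) where
  carrier := {F | ∃ C, HasAtomicBound U F C}
  mul_mem' := fun ⟨C, hF⟩ ⟨D, hG⟩ => ⟨C * D, hF.mul hG⟩
  add_mem' := fun ⟨C, hF⟩ ⟨D, hG⟩ => ⟨C + D, hF.add hG⟩
  algebraMap_mem' := fun c => ⟨‖c‖, .const U c⟩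

variable (U) in
/-- The algebra `atomicSubalgebra U` as a type of its own, to be normed by `atomicNorm U`. -/
def AtomicAlgebra : Type _ := atomicSubalgebra U

namespace AtomicAlgebra

noncomputable instance : CommRing (AtomicAlgebra U) :=
  inferInstanceAs (CommRing (atomicSubalgebra U))

noncomputable instance : Algebra ℂ (AtomicAlgebra U) :=
  inferInstanceAs (Algebra ℂ (atomicSubalgebra U))

variable (U) in
/-- The inclusion of the atomic algebra into the algebra of all functions. -/
def toFun : AtomicAlgebra U →ₐ[ℂ] (Y → ℂ) :=
  (atomicSubalgebra U).val

lemma toFun_injective : Function.Injective (toFun U) := Subtype.val_injective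

lemma exists_hasAtomicBound (X : AtomicAlgebra U) : ∃ C, HasAtomicBound U (toFun U X) C := X.2

variable (U) in
/-- `atomicNorm U` as a ring norm on the atomic algebra. -/
noncomputable def ringNorm : RingNorm (AtomicAlgebra U) :=
  have bound (X : AtomicAlgebra U) := X.exists_hasAtomicBound.choose_spec
  have neg_le (X : AtomicAlgebra U) :
      atomicNorm U (toFun U (-X)) ≤ atomicNorm U (toFun U X) := by
    simpa using (bound X).atomicNorm_smul_le (-1)
  { toFun := fun X => atomicNorm U (toFun U X)
    map_zero' := le_antisymm (by simpa using (bound 0).atomicNorm_smul_le 0)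
      (bound 0).atomicNorm_nonneg
    add_le' := fun X Z => by simpa using (bound X).atomicNorm_add_le (bound Z)
    neg' := fun X => le_antisymm (neg_le X) (by simpa using neg_le (-X))
    mul_le' := fun X Z => by simpa using (bound X).atomicNorm_mul_le (bound Z)
    eq_zero_of_map_eq_zero' := fun X hX => toFun_injective (funext fun y => by
      simpa [hX] using (bound X).norm_le_atomicNorm y) }

noncomputable instance : NormedCommRing (AtomicAlgebra U) :=
  { (ringNorm U).toNormedRing with mul_comm := mul_comm }

lemma norm_def (X : AtomicAlgebra U) : ‖X‖ = atomicNorm U (toFun U X) := rfl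

noncomputable instance : NormedAlgebra ℂ (AtomicAlgebra U) :=
  { (inferInstance : Algebra ℂ (AtomicAlgebra U)) with
    norm_smul_le := fun c X => by
      rw [norm_def, map_smul]
      exact X.exists_hasAtomicBound.choose_spec.atomicNorm_smul_le c }

lemma exists_toFun_eq {F : Y → ℂ} {C : ℝ} (hF : HasAtomicBound U F C) :
    ∃ X : AtomicAlgebra U, ‖X‖ ≤ C ∧ toFun U X = F :=
  ⟨⟨F, C, hF⟩, hF.atomicNorm_le, rfl⟩

lemma norm_toFun_apply_le (X : AtomicAlgebra U) (y : Y) : ‖toFun U X y‖ ≤ ‖X‖ :=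
  X.exists_hasAtomicBound.choose_spec.norm_le_atomicNorm y

instance [Nonempty Y] : NormOneClass (AtomicAlgebra U) where
  norm_one := by
    refine le_antisymm ?_ ?_
    · simpa [Pi.one_def, norm_def] using (HasAtomicBound.const U 1).atomicNorm_le
    · simpa using norm_toFun_apply_le (1 : AtomicAlgebra U) (Classical.arbitrary Y)

instance : CompleteSpace (AtomicAlgebra U) := by
  refine NormedAddCommGroup.completeSpace_of_summable_imp_tendsto fun X hX => ?_
  have hsum : Summable fun k => ‖X k‖ + (1 / 2 : ℝ) ^ k := hX.add summable_geometric_two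
  have hbound (k : ℕ) : HasAtomicBound U (toFun U (X k)) (‖X k‖ + (1 / 2 : ℝ) ^ k) :=
    (X k).exists_hasAtomicBound.choose_spec.self (by positivity)
  obtain ⟨S, -, hS⟩ := exists_toFun_eq (HasAtomicBound.tsum hbound hsum)
  refine ⟨S, tendsto_iff_norm_sub_tendsto_zero.2 (squeeze_zero (fun _ => norm_nonneg _)
    (fun n => ?_) (tendsto_sum_nat_add fun k => ‖X k‖ + (1 / 2 : ℝ) ^ k))⟩
  have htail : toFun U (S - ∑ k ∈ Finset.range n, X k) = fun y => ∑' k, toFun U (X (k + n)) y := by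
    ext y
    have hy : Summable fun k => toFun U (X k) y :=
      .of_norm_bounded hX fun k => norm_toFun_apply_le (X k) y
    simp [hS, ← hy.sum_add_tsum_nat_add n]
  rw [norm_sub_rev, norm_def, htail]
  exact (HasAtomicBound.tsum (fun k => hbound (k + n))
    ((summable_nat_add_iff n).2 hsum)).atomicNorm_le

end AtomicAlgebra

end AtomicAlgebra

section SchwartzDensity

open scoped SchwartzMap

variable {E F : Type*} [NormedAddCommGroup E] [NormedSpace ℝ E] [NormedAddCommGroup F]
  [NormedSpace ℝ F]

lemma norm_pow_mul_norm_iteratedFDeriv_smul_le {ψ : E → ℝ} (hψ : ContDiff ℝ ∞ ψ) {x : E}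
    {C : ℕ → ℝ} (hC : ∀ i, ‖iteratedFDeriv ℝ i ψ x‖ ≤ C i) (u : 𝓢(E, F)) (k n : ℕ) :
    ‖x‖ ^ k * ‖iteratedFDeriv ℝ n (fun x => ψ x • u x) x‖ ≤
      ∑ i ∈ Finset.range (n + 1), n.choose i * C i * SchwartzMap.seminorm ℝ k (n - i) u := by
  have hleib := norm_iteratedFDeriv_smul_le hψ (u.smooth ⊤) x (n := n) (mod_cast le_top)
  refine (mul_le_mul_of_nonneg_left hleib (by positivity)).trans ?_
  rw [Finset.mul_sum]
  refine Finset.sum_le_sum fun i _ => ?_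
  have hCi : 0 ≤ C i := (norm_nonneg _).trans (hC i)
  calc ‖x‖ ^ k * (n.choose i * ‖iteratedFDeriv ℝ i ψ x‖ * ‖iteratedFDeriv ℝ (n - i) u x‖)
      = n.choose i * ‖iteratedFDeriv ℝ i ψ x‖ * (‖x‖ ^ k * ‖iteratedFDeriv ℝ (n - i) u x‖) := by
        ring
    _ ≤ n.choose i * C i * SchwartzMap.seminorm ℝ k (n - i) u := by
        gcongr
        · exact hC i
        · exact SchwartzMap.le_seminorm ℝ k (n - i) u x

lemma norm_pow_mul_norm_iteratedFDeriv_smul_le_of_eqOn_ball {ψ : E → ℝ} (hψ : ContDiff ℝ ∞ ψ)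
    {R : ℝ} (hR : 0 < R) (hzero : Set.EqOn ψ 0 (Metric.ball 0 R)) {x : E} {C : ℕ → ℝ}
    (hC : ∀ i, ‖iteratedFDeriv ℝ i ψ x‖ ≤ C i) (u : 𝓢(E, F)) (k n : ℕ) :
    ‖x‖ ^ k * ‖iteratedFDeriv ℝ n (fun x => ψ x • u x) x‖ ≤
      R⁻¹ * ∑ i ∈ Finset.range (n + 1),
        n.choose i * C i * SchwartzMap.seminorm ℝ (k + 1) (n - i) u := by
  have hbound := norm_pow_mul_norm_iteratedFDeriv_smul_le hψ hC u (k + 1) n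
  rw [← div_eq_inv_mul, le_div_iff₀ hR]
  rcases lt_or_ge ‖x‖ R with hx | hx
  · have hnhds : (fun x => ψ x • u x) =ᶠ[𝓝 x] fun _ => 0 := by
      filter_upwards [Metric.isOpen_ball.mem_nhds (mem_ball_zero_iff.2 hx)] with z hz
      simp [hzero hz]
    rw [(hnhds.iteratedFDeriv ℝ n).eq_of_nhds]
    simpa using (by positivity : (0 : ℝ) ≤ _).trans hbound
  · refine le_trans ?_ hbound
    rw [pow_succ, mul_right_comm]
    gcongr

variable [FiniteDimensional ℝ E]

lemma exists_norm_iteratedFDeriv_bump_comp_smul_sub_one_le (b : ContDiffBump (0 : E)) (i : ℕ) :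
    ∃ C, ∀ r : ℝ, |r| ≤ 1 → ∀ x, ‖iteratedFDeriv ℝ i (fun x => b (r • x) - 1) x‖ ≤ C := by
  have hb : ContDiff ℝ i b := b.contDiff
  obtain ⟨C, hC⟩ := (hb.continuous_iteratedFDeriv le_rfl).bounded_above_of_compact_support
    (b.hasCompactSupport.iteratedFDeriv i)
  refine ⟨C + 1, fun r hr x => ?_⟩
  have hbr : ContDiff ℝ i fun x => b (r • x) := hb.comp (contDiff_const_smul r)
  rw [show (fun x => b (r • x) - 1) = (fun x => b (r • x)) - fun _ : E => (1 : ℝ) from rfl,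
    iteratedFDeriv_sub_apply hbr.contDiffAt contDiffAt_const,
    iteratedFDeriv_comp_const_smul r hb]
  refine (norm_sub_le _ _).trans (add_le_add ?_ ?_)
  · rw [norm_smul, norm_pow]
    exact (mul_le_of_le_one_left (norm_nonneg _) (pow_le_one₀ (norm_nonneg _) hr)).trans (hC _)
  · rcases eq_or_ne i 0 with rfl | hi
    · simp
    · simp [iteratedFDeriv_const_of_ne hi]

lemma exists_norm_pow_mul_norm_iteratedFDeriv_bump_comp_smul_sub_one_smul_le
    (b : ContDiffBump (0 : E)) (u : 𝓢(E, F)) (k n : ℕ) :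
    ∃ M, ∀ R : ℝ, 1 ≤ R → ∀ x,
      ‖x‖ ^ k * ‖iteratedFDeriv ℝ n (fun x => (b (R⁻¹ • x) - 1) • u x) x‖ ≤ R⁻¹ * M := by
  choose C hC using exists_norm_iteratedFDeriv_bump_comp_smul_sub_one_le b
  refine ⟨b.rIn⁻¹ * ∑ i ∈ Finset.range (n + 1),
    n.choose i * C i * SchwartzMap.seminorm ℝ (k + 1) (n - i) u, fun R hR x => ?_⟩
  have hR0 : 0 < R := zero_lt_one.trans_le hR
  have hR1 : |R⁻¹| ≤ 1 := (abs_of_pos (inv_pos.2 hR0)).trans_le (inv_le_one_of_one_le₀ hR)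
  rw [← mul_assoc, ← mul_inv]
  refine norm_pow_mul_norm_iteratedFDeriv_smul_le_of_eqOn_ball
    ((b.contDiff.comp (contDiff_const_smul _)).sub contDiff_const) (mul_pos hR0 b.rIn_pos)
    (fun z hz => ?_) (fun i => hC i _ hR1 x) u k n
  have hz' : R⁻¹ • z ∈ Metric.closedBall 0 b.rIn := by
    rw [mem_closedBall_zero_iff, norm_smul, norm_inv, Real.norm_of_nonneg hR0.le,
      inv_mul_le_iff₀ hR0]
    exact (mem_ball_zero_iff.1 hz).le
  simp [b.one_of_mem_closedBall hz']

lemma dense_hasCompactSupport_schwartzMap : Dense {u : 𝓢(E, F) | HasCompactSupport u} := by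
  intro u
  let b : ContDiffBump (0 : E) := ⟨1, 2, one_pos, one_lt_two⟩
  let R : ℕ → ℝ := fun m => m + 1
  have hR : ∀ m, 1 ≤ R m := fun m => le_add_of_nonneg_left m.cast_nonneg
  have hsupp : ∀ m, HasCompactSupport fun x => b ((R m)⁻¹ • x) • u x := fun m =>
    (b.hasCompactSupport.comp_smul (inv_ne_zero (zero_lt_one.trans_le (hR m)).ne')).smul_right
  let v : ℕ → 𝓢(E, F) := fun m =>
    (hsupp m).toSchwartzMap ((b.contDiff.comp (contDiff_const_smul _)).smul (u.smooth ⊤))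
  suffices hv : Filter.Tendsto v Filter.atTop (𝓝 u) from
    mem_closure_of_tendsto hv (.of_forall hsupp)
  rw [(schwartz_withSeminorms ℝ E F).tendsto_nhds]
  rintro ⟨k, n⟩ ε hε
  obtain ⟨M, hM⟩ :=
    exists_norm_pow_mul_norm_iteratedFDeriv_bump_comp_smul_sub_one_smul_le b u k n
  have hcoe : ∀ m, ⇑(v m - u) = fun x => (b ((R m)⁻¹ • x) - 1) • u x := fun m => by
    ext x
    simp [v, sub_smul]
  have hlim : Filter.Tendsto (fun m => (R m)⁻¹ * M) Filter.atTop (𝓝 0) := by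
    simpa [R] using (tendsto_one_div_add_atTop_nhds_zero_nat (𝕜 := ℝ)).mul_const M
  filter_upwards [hlim.eventually_lt_const hε] with m hm
  refine (SchwartzMap.seminorm_le_bound ℝ k n _ ?_ fun x => ?_).trans_lt hm
  · exact (by positivity : (0 : ℝ) ≤ _).trans (hM (R m) (hR m) 0)
  · rw [hcoe]
    exact hM (R m) (hR m) x

end SchwartzDensity

section FourierStieltjes

open scoped SchwartzMap

variable {V : Type*} [NormedAddCommGroup V] [InnerProductSpace ℝ V]

/-- The Fourier–Stieltjes transform of the point mass at `v`. -/
noncomputable def diracFourier (v y : V) : ℂ := 𝐞 (-⟪v, y⟫)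

lemma diracFourier_zero (y : V) : diracFourier 0 y = 1 := by
  simp [diracFourier]

lemma diracFourier_add (v w y : V) :
    diracFourier (v + w) y = diracFourier v y * diracFourier w y := by
  simp [diracFourier, inner_add_left, neg_add_rev, AddChar.map_add_eq_mul, mul_comm]

lemma diracFourier_neg (v y : V) : diracFourier (-v) y = conj (diracFourier v y) := by
  simp [diracFourier, Circle.starRingEnd_addChar]

lemma norm_diracFourier (v y : V) : ‖diracFourier v y‖ = 1 := Circle.norm_coe _

lemma summable_mul_diracFourier {a : ℕ → ℂ} (ha : Summable fun n => ‖a n‖) (γ : ℕ → V) (y : V) :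
    Summable fun n => a n * diracFourier (γ n) y :=
  .of_norm (by simpa only [norm_mul, norm_diracFourier, mul_one] using ha)

lemma contDiff_diracFourier (v : V) : ContDiff ℝ ∞ (diracFourier v) := by
  have hinner : ContDiff ℝ ∞ fun y : V => ((2 * π * -⟪v, y⟫ : ℝ) : ℂ) :=
    ofRealCLM.contDiff.comp (contDiff_const.mul (contDiff_const.inner ℝ contDiff_id).neg)
  exact (hinner.mul contDiff_const).cexp

variable [FiniteDimensional ℝ V] [MeasurableSpace V] [BorelSpace V]

lemma dense_toLpCLM_image_hasCompactSupport_fourier :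
    Dense (SchwartzMap.toLpCLM ℂ ℂ 1 (volume : Measure V) ''
      {g : 𝓢(V, ℂ) | HasCompactSupport (𝓕 g : 𝓢(V, ℂ))}) := by
  refine DenseRange.dense_image (SchwartzMap.denseRange_toLpCLM ENNReal.one_ne_top)
    (ContinuousLinearMap.continuous _) ?_
  exact dense_hasCompactSupport_schwartzMap.preimage
    (FourierTransform.fourierCLE ℂ 𝓢(V, ℂ)).toHomeomorph.isOpenMap

lemma exists_hasCompactSupport_fourier_integral_norm_sub_le {f : V → ℂ} (hf : Integrable f) {ε : ℝ}
    (hε : 0 < ε) :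
    ∃ g : 𝓢(V, ℂ), HasCompactSupport (𝓕 g : 𝓢(V, ℂ)) ∧ ∫ x, ‖f x - g x‖ ≤ ε := by
  obtain ⟨-, ⟨g, hg, rfl⟩, hfg⟩ :=
    dense_toLpCLM_image_hasCompactSupport_fourier.exists_dist_lt hf.toL1 hε
  refine ⟨g, hg, le_of_eq_of_le ?_ hfg.le⟩
  rw [dist_eq_norm, L1.norm_eq_integral_norm]
  refine integral_congr_ae ?_
  filter_upwards [hf.coeFn_toL1, g.coeFn_toLp 1 volume, Lp.coeFn_sub hf.toL1 (g.toLp 1)]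
    with x hfx hgx hsub
  rw [SchwartzMap.toLpCLM_apply, hsub, Pi.sub_apply, hfx, hgx]

lemma exists_integrable_hasSum_fourier {f : ℕ → V → ℂ} (hf : ∀ n, Integrable (f n))
    (hsum : Summable fun n => ∫ x, ‖f n x‖) :
    ∃ g : V → ℂ, Integrable g ∧ ∀ y, HasSum (fun n => 𝓕 (f n) y) (𝓕 g y) := by
  have hL1 : Summable fun n => (hf n).toL1 := .of_norm <| by
    simpa only [L1.norm_of_fun_eq_integral_norm] using hsum
  refine ⟨↑(∑' n, (hf n).toL1), L1.integrable_coeFn _, fun y => ?_⟩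
  have h := (hL1.hasSum.mapL (Real.Lp.fourierTransformCLM V ℂ)).mapL
    (BoundedContinuousFunction.evalCLM ℂ y)
  exact h.congr_fun fun n => Real.fourier_congr_ae (hf n).coeFn_toL1.symm y

lemma fourier_comp_add_right (f : V → ℂ) (v y : V) :
    𝓕 (fun x => f (x + v)) y = 𝐞 ⟪v, y⟫ * 𝓕 f y :=
  congrFun (VectorFourier.fourierIntegral_comp_add_right 𝐞 volume (innerₗ V) f v) y

lemma fourier_const_mul (c : ℂ) (f : V → ℂ) (y : V) : 𝓕 (fun x => c * f x) y = c * 𝓕 f y :=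
  congrFun (VectorFourier.fourierIntegral_const_smul 𝐞 volume (innerₗ V) f c) y

lemma fourier_conj_comp_neg (f : V → ℂ) (y : V) :
    𝓕 (fun x => conj (f (-x))) y = conj (𝓕 f y) := by
  simp only [Real.fourier_eq, ← integral_conj, Circle.smul_def, smul_eq_mul, map_mul,
    Circle.starRingEnd_addChar]
  rw [← integral_neg_eq_self]
  simp

lemma integral_norm_convolution_mul_le {f g : V → ℂ} (hf : Integrable f) (hg : Integrable g) :
    ∫ x, ‖convolution f g (.mul ℂ ℂ) volume x‖ ≤ (∫ x, ‖f x‖) * ∫ x, ‖g x‖ := by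
  rw [← ContinuousLinearMap.mul_apply' ℝ ℝ, ← integral_convolution _ hf.norm hg.norm]
  refine integral_mono (hf.integrable_convolution _ hg).norm
    (hf.norm.integrable_convolution _ hg.norm) fun x => ?_
  exact (norm_integral_le_integral_norm _).trans (by simp [convolution_def])

lemma fourier_comp_sub_right (f : V → ℂ) (v y : V) :
    𝓕 (fun x => f (x - v)) y = diracFourier v y * 𝓕 f y := by
  simpa [diracFourier, sub_eq_add_neg] using fourier_comp_add_right f (-v) y

/-- The Fourier–Stieltjes transform of the measure `f dx + ∑ aₙ δ_{γₙ}`. -/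
noncomputable def fourierStieltjes (f : V → ℂ) (a : ℕ → ℂ) (γ : ℕ → V) (y : V) : ℂ :=
  𝓕 f y + ∑' n, a n * diracFourier (γ n) y

variable (V) in
/-- The monoid formed by the Fourier–Stieltjes transforms of unit point masses and of absolutely
continuous measures of total variation at most `1`. -/
noncomputable def fourierGenerators : Submonoid (V → Metric.closedBall (0 : ℂ) 1) where
  carrier := {u | (∃ v, ∀ y, (u y : ℂ) = diracFourier v y) ∨
    ∃ f : V → ℂ, Integrable f ∧ ∫ x, ‖f x‖ ≤ 1 ∧ ∀ y, (u y : ℂ) = 𝓕 f y}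
  one_mem' := .inl ⟨0, fun y => by simp [diracFourier_zero]⟩
  mul_mem' := by
    have translate {f : V → ℂ} (hf : Integrable f) (hf1 : ∫ x, ‖f x‖ ≤ 1) (v : V) :
        ∃ g : V → ℂ, Integrable g ∧ ∫ x, ‖g x‖ ≤ 1 ∧ ∀ y, diracFourier v y * 𝓕 f y = 𝓕 g y :=
      ⟨fun x => f (x - v), hf.comp_sub_right v,
        (integral_sub_right_eq_self (fun x => ‖f x‖) v).trans_le hf1,
        fun y => (fourier_comp_sub_right f v y).symm⟩
    rintro u w (⟨v, hu⟩ | ⟨f, hf, hf1, hu⟩) (⟨v', hw⟩ | ⟨g, hg, hg1, hw⟩) <;>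
      simp only [Set.mem_ofPred_eq, Pi.mul_apply, Metric.unitClosedBall.coe_mul, hu, hw]
    · exact .inl ⟨v + v', fun y => (diracFourier_add v v' y).symm⟩
    · exact .inr (translate hg hg1 v)
    · exact .inr (by simpa only [mul_comm] using translate hf hf1 v')
    · exact .inr ⟨convolution f g (.mul ℂ ℂ) volume, hf.integrable_convolution _ hg,
        (integral_norm_convolution_mul_le hf hg).trans
          (mul_le_one₀ hf1 (integral_nonneg fun _ => norm_nonneg _) hg1),
        fun y => (Real.fourier_mul_convolution_eq hf hg y).symm⟩

lemma hasAtomicBound_diracFourier (v : V) (c : ℂ) :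
    HasAtomicBound (fourierGenerators V) (fun y => c * diracFourier v y) ‖c‖ :=
  .of_mem (⟨fun y => ⟨diracFourier v y, by simp [norm_diracFourier]⟩, .inl ⟨v, fun _ => rfl⟩⟩ :
    fourierGenerators V) c

lemma hasAtomicBound_fourier {f : V → ℂ} (hf : Integrable f) :
    HasAtomicBound (fourierGenerators V) (𝓕 f) (∫ x, ‖f x‖) := by
  have hnonneg : 0 ≤ ∫ x, ‖f x‖ := integral_nonneg fun _ => norm_nonneg _
  have hbound : ∀ y, ‖𝓕 f y‖ ≤ ∫ x, ‖f x‖ :=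
    VectorFourier.norm_fourierIntegral_le_integral_norm 𝐞 volume (innerₗ V) f
  rcases hnonneg.eq_or_lt with hzero | hpos
  · have hF : 𝓕 f = fun _ => 0 := funext fun y => norm_le_zero_iff.1 ((hbound y).trans hzero.ge)
    rw [hF, ← hzero]
    simpa using HasAtomicBound.const (fourierGenerators V) 0
  set m := ∫ x, ‖f x‖
  have hm : ‖(m : ℂ)‖ = m := Complex.norm_of_nonneg hnonneg
  have hscale (y : V) : 𝓕 (fun x => (m : ℂ)⁻¹ * f x) y = (m : ℂ)⁻¹ * 𝓕 f y :=
    fourier_const_mul _ f y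
  let u : fourierGenerators V := ⟨fun y => ⟨(m : ℂ)⁻¹ * 𝓕 f y, ?_⟩,
    .inr ⟨fun x => (m : ℂ)⁻¹ * f x, hf.const_mul _, ?_, fun y => (hscale y).symm⟩⟩
  · have hmu := HasAtomicBound.of_mem u m
    simp only [hm, u] at hmu
    convert hmu using 2 with y
    rw [mul_inv_cancel_left₀ (ofReal_ne_zero.2 hpos.ne')]
  · rw [mem_closedBall_zero_iff, norm_mul, norm_inv, hm]
    exact inv_mul_le_one_of_le₀ (hbound y) hnonneg
  · simp only [norm_mul, norm_inv, hm, integral_const_mul]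
    exact inv_mul_le_one

lemma hasAtomicBound_fourierStieltjes {f : V → ℂ} (hf : Integrable f) {a : ℕ → ℂ}
    (ha : Summable fun n => ‖a n‖) (γ : ℕ → V) :
    HasAtomicBound (fourierGenerators V) (fourierStieltjes f a γ) ((∫ x, ‖f x‖) + ∑' n, ‖a n‖) :=
  (hasAtomicBound_fourier hf).add
    (.tsum (fun n => hasAtomicBound_diracFourier (γ n) (a n)) ha)

lemma exists_eq_fourier_add_diracFourier (u : fourierGenerators V) :
    ∃ (f : V → ℂ) (b : ℂ) (v : V), Integrable f ∧ ∫ x, ‖f x‖ ≤ 1 ∧ ‖b‖ ≤ 1 ∧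
      ∀ y, (u.1 y : ℂ) = 𝓕 f y + b * diracFourier v y := by
  rcases u.2 with ⟨v, hu⟩ | ⟨f, hf, hf1, hu⟩
  · exact ⟨0, 1, v, integrable_zero _ _ _, by simp, by simp, fun y => by simp [hu, Real.fourier_eq]⟩
  · exact ⟨f, 0, 0, hf, hf1, by simp, fun y => by simp [hu]⟩

lemma HasAtomicBound.exists_eq_fourierStieltjes {F : V → ℂ} {C : ℝ}
    (hF : HasAtomicBound (fourierGenerators V) F C) :
    ∃ (f : V → ℂ) (a : ℕ → ℂ) (γ : ℕ → V), Integrable f ∧ Summable (fun n => ‖a n‖) ∧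
      F = fourierStieltjes f a γ := by
  obtain ⟨c, u, hc, -, hF⟩ := hF
  choose f b γ hf hf1 hb hu using fun n => exists_eq_fourier_add_diracFourier (u n)
  have hsum : Summable fun n => ∫ x, ‖c n * f n x‖ := by
    simp only [norm_mul, integral_const_mul]
    exact hc.of_nonneg_of_le (fun n => by positivity)
      fun n => mul_le_of_le_one_right (norm_nonneg _) (hf1 n)
  obtain ⟨g, hg, hgf⟩ := exists_integrable_hasSum_fourier (fun n => (hf n).const_mul (c n)) hsum
  have hcb : Summable fun n => ‖c n * b n‖ := by
    simp only [norm_mul]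
    exact hc.of_nonneg_of_le (fun n => by positivity)
      fun n => mul_le_of_le_one_right (norm_nonneg _) (hb n)
  refine ⟨g, fun n => c n * b n, γ, hg, hcb, funext fun y => (hF y).unique ?_⟩
  refine ((hgf y).add (summable_mul_diracFourier hcb γ y).hasSum).congr_fun fun n => ?_
  rw [hu, fourier_const_mul]
  ring

lemma exists_fourier_eq_of_hasCompactSupport {u : V → ℂ} (hu : HasCompactSupport u)
    (hu' : ContDiff ℝ ∞ u) : ∃ g : 𝓢(V, ℂ), 𝓕 (g : V → ℂ) = u := by
  refine ⟨𝓕⁻ (hu.toSchwartzMap hu'), ?_⟩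
  rw [← SchwartzMap.fourier_coe, FourierTransform.fourier_fourierInv_eq]
  rfl

variable (V) in
/-- The Banach algebra of Fourier–Stieltjes transforms of measures without singular component. -/
abbrev WienerAlgebra : Type _ := AtomicAlgebra (fourierGenerators V)

variable (V) in
/-- The inclusion of the Wiener algebra into the algebra of all functions. -/
noncomputable abbrev WienerAlgebra.toFun : WienerAlgebra V →ₐ[ℂ] (V → ℂ) :=
  AtomicAlgebra.toFun (fourierGenerators V)

lemma SmoothlyOperatesOn.add_of_hasCompactSupport {p σ : V → ℝ}
    (hp : SmoothlyOperatesOn (WienerAlgebra.toFun V) p) (hp' : ContDiff ℝ ∞ p)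
    (hσ : HasCompactSupport σ) (hσ' : ContDiff ℝ ∞ σ) :
    SmoothlyOperatesOn (WienerAlgebra.toFun V) (p + σ) := by
  intro φ hφ
  obtain ⟨X, hX⟩ := hp φ hφ
  have hsupp : HasCompactSupport (φ ∘ (p + σ) - φ ∘ p) := hσ.mono fun y hy hσy => hy <| by
    simp [show σ y = 0 from hσy]
  obtain ⟨g, hg⟩ := exists_fourier_eq_of_hasCompactSupport hsupp
    ((hφ.comp (hp'.add hσ')).sub (hφ.comp hp'))
  obtain ⟨Z, -, hZ⟩ := AtomicAlgebra.exists_toFun_eq (hasAtomicBound_fourier g.integrable)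
  exact ⟨X + Z, by rw [map_add, hX, hZ, hg, add_sub_cancel]⟩

lemma exists_unit_toFun_eq_diracFourier (v : V) :
    ∃ e : (WienerAlgebra V)ˣ, ‖(e : WienerAlgebra V)‖ ≤ 1 ∧ ‖(↑e⁻¹ : WienerAlgebra V)‖ ≤ 1 ∧
      WienerAlgebra.toFun V e = diracFourier v ∧
      WienerAlgebra.toFun V ↑e⁻¹ = diracFourier (-v) := by
  have hdirac (w : V) : ∃ e : WienerAlgebra V, ‖e‖ ≤ 1 ∧
      WienerAlgebra.toFun V e = diracFourier w := by
    simpa using AtomicAlgebra.exists_toFun_eq (hasAtomicBound_diracFourier w 1)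
  obtain ⟨e, he, hev⟩ := hdirac v
  obtain ⟨e', he', hev'⟩ := hdirac (-v)
  have hmul : e * e' = 1 := AtomicAlgebra.toFun_injective <| by
    ext y
    simp [hev, hev', ← diracFourier_add, diracFourier_zero]
  exact ⟨⟨e, e', hmul, (mul_comm e' e).trans hmul⟩, he, he', hev, hev'⟩

lemma smoothlyOperatesOn_re_sum_mul_diracFourier {α : Type*} (s : Finset α) (a : α → ℂ)
    (γ : α → V) :
    SmoothlyOperatesOn (WienerAlgebra.toFun V)
      fun y => (∑ i ∈ s, a i * diracFourier (γ i) y).re := by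
  choose e he he' hev hev' using exists_unit_toFun_eq_diracFourier (V := V)
  refine (HasPolynomialExpGrowth.sum s fun i _ => hasPolynomialExpGrowth_add_inv
    AtomicAlgebra.toFun_injective (he (γ i)) (he' (γ i)) (a i / 2)).smoothlyOperatesOn ?_
  ext y
  have hterm (i : α) : a i / 2 * diracFourier (γ i) y + conj (a i / 2) * diracFourier (-γ i) y =
      ((a i * diracFourier (γ i) y).re : ℂ) := by
    rw [re_eq_add_conj, diracFourier_neg, map_mul, map_div₀, map_ofNat]
    ring
  simp only [map_sum, map_add, map_smul, hev, hev', Finset.sum_apply, Pi.add_apply, Pi.smul_apply,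
    smul_eq_mul, hterm, re_sum, ofReal_sum]

lemma conj_fourierStieltjes (f : V → ℂ) (a : ℕ → ℂ) (γ : ℕ → V) (y : V) :
    conj (fourierStieltjes f a γ y) =
      fourierStieltjes (fun x => conj (f (-x))) (fun n => conj (a n)) (fun n => -γ n) y := by
  simp only [fourierStieltjes, map_add, conj_tsum, map_mul, diracFourier_neg, fourier_conj_comp_neg]

lemma const_mul_fourierStieltjes (c : ℂ) (f : V → ℂ) (a : ℕ → ℂ) (γ : ℕ → V) (y : V) :
    c * fourierStieltjes f a γ y =
      fourierStieltjes (fun x => c * f x) (fun n => c * a n) γ y := by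
  simp only [fourierStieltjes, mul_add, ← tsum_mul_left, mul_assoc, fourier_const_mul]

lemma fourierStieltjes_sub_sum_sub_fourier {f g : V → ℂ} (hf : Integrable f) (hg : Integrable g)
    {a : ℕ → ℂ} (ha : Summable fun n => ‖a n‖) (γ : ℕ → V) (N : ℕ) (y : V) :
    fourierStieltjes f a γ y - (∑ n ∈ Finset.range N, a n * diracFourier (γ n) y + 𝓕 g y) =
      fourierStieltjes (f - g) (fun n => a (n + N)) (fun n => γ (n + N)) y := by
  have hsub : 𝓕 (f - g) y = 𝓕 f y - 𝓕 g y := by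
    simp only [Real.fourier_eq, Pi.sub_apply, smul_sub]
    exact integral_sub ((Real.fourierIntegral_convergent_iff y).2 hf)
      ((Real.fourierIntegral_convergent_iff y).2 hg)
  rw [fourierStieltjes, fourierStieltjes, hsub,
    ← (summable_mul_diracFourier ha γ y).sum_add_tsum_nat_add N]
  ring

lemma hasAtomicBound_re_fourierStieltjes {f : V → ℂ} (hf : Integrable f) {a : ℕ → ℂ}
    (ha : Summable fun n => ‖a n‖) (γ : ℕ → V) :
    HasAtomicBound (fourierGenerators V) (fun y => ((fourierStieltjes f a γ y).re : ℂ))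
      ((∫ x, ‖f x‖) + ∑' n, ‖a n‖) := by
  have hconj : HasAtomicBound (fourierGenerators V) (fun y => conj (fourierStieltjes f a γ y))
      ((∫ x, ‖f x‖) + ∑' n, ‖a n‖) := by
    simpa only [conj_fourierStieltjes, RCLike.norm_conj, integral_neg_eq_self (fun x => ‖f x‖)]
      using hasAtomicBound_fourierStieltjes (f := fun x => conj (f (-x))) (a := fun n => conj (a n))
        ((conjCLE : ℂ →L[ℝ] ℂ).integrable_comp hf.comp_neg)
        (by simpa only [RCLike.norm_conj] using ha) fun n => -γ n
  have h := ((hasAtomicBound_fourierStieltjes hf ha γ).add hconj).const_mul (1 / 2)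
  convert h using 1
  · ext y
    rw [re_eq_add_conj]
    ring
  · norm_num
    ring

lemma smoothlyApproximable_re_fourierStieltjes {f : V → ℂ} (hf : Integrable f) {a : ℕ → ℂ}
    (ha : Summable fun n => ‖a n‖) (γ : ℕ → V) :
    SmoothlyApproximable (WienerAlgebra.toFun V) fun y => (fourierStieltjes f a γ y).re := by
  intro ε hε
  obtain ⟨N, hN⟩ :=
    ((tendsto_sum_nat_add fun n => ‖a n‖).eventually_lt_const (half_pos hε)).exists
  obtain ⟨g, hg, hfg⟩ := exists_hasCompactSupport_fourier_integral_norm_sub_le hf (half_pos hε)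
  let P (y : V) : ℂ := ∑ n ∈ Finset.range N, a n * diracFourier (γ n) y
  have hP : ContDiff ℝ ∞ P := .sum fun n _ => contDiff_const.mul (contDiff_diracFourier (γ n))
  obtain ⟨X, hX, hXR⟩ := AtomicAlgebra.exists_toFun_eq <| hasAtomicBound_re_fourierStieltjes
    (hf.sub g.integrable) ((summable_nat_add_iff N).2 ha) fun n => γ (n + N)
  refine ⟨fun y => (P y).re + ((𝓕 g : 𝓢(V, ℂ)) y).re, ?_, X, ?_, ?_⟩
  · exact (smoothlyOperatesOn_re_sum_mul_diracFourier (.range N) a γ).add_of_hasCompactSupport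
      (reCLM.contDiff.comp hP) (hg.comp_left zero_re)
      (reCLM.contDiff.comp (SchwartzMap.smooth _ ⊤))
  · exact hX.trans ((add_le_add hfg hN.le).trans_eq (add_halves ε))
  · rw [hXR]
    ext y
    rw [← fourierStieltjes_sub_sum_sub_fourier hf g.integrable ha, ← SchwartzMap.fourier_coe,
      sub_re, add_re]

lemma smoothlyApproximable_im_fourierStieltjes {f : V → ℂ} (hf : Integrable f) {a : ℕ → ℂ}
    (ha : Summable fun n => ‖a n‖) (γ : ℕ → V) :
    SmoothlyApproximable (WienerAlgebra.toFun V) fun y => (fourierStieltjes f a γ y).im := by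
  have hre := smoothlyApproximable_re_fourierStieltjes (hf.const_mul (-I)) (a := fun n => -I * a n)
    (by simpa using ha) γ
  simp only [← const_mul_fourierStieltjes] at hre
  simpa using hre

theorem wiener_levi_local_measures_general {K : Set ℂ} (hK : IsClosed K) {h : ℂ → ℂ}
    (hh : AnalyticOnNhd ℝ h K) {f : V → ℂ} (hf : Integrable f) {a : ℕ → ℂ}
    (ha : Summable fun n => ‖a n‖) (γ : ℕ → V) :
    ∃ (g : V → ℂ) (b : ℕ → ℂ) (ρ : ℕ → V), Integrable g ∧ Summable (fun n => ‖b n‖) ∧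
      ∀ y, fourierStieltjes f a γ y ∈ K →
        fourierStieltjes g b ρ y = h (fourierStieltjes f a γ y) := by
  have hF := hasAtomicBound_fourierStieltjes hf ha γ
  obtain ⟨H, hH⟩ := exists_map_eq_comp_of_isCompact AtomicAlgebra.toFun_injective
    (smoothlyApproximable_re_fourierStieltjes hf ha γ)
    (smoothlyApproximable_im_fourierStieltjes hf ha γ)
    ((isCompact_closedBall 0 ((∫ x, ‖f x‖) + ∑' n, ‖a n‖)).inter_right hK)
    (hh.mono Set.inter_subset_right)
  obtain ⟨C, hC⟩ := H.exists_hasAtomicBound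
  obtain ⟨g, b, ρ, hg, hb, hgb⟩ := hC.exists_eq_fourierStieltjes
  refine ⟨g, b, ρ, hg, hb, fun y hy => ?_⟩
  rw [← hgb, hH y ⟨mem_closedBall_zero_iff.2 (hF.norm_le y), hy⟩]

end FourierStieltjes

lemma fourierStieltjes_eq_measureFourier {d : ℕ} (f : EuclideanSpace ℝ (Fin d) → ℂ) (a : ℕ → ℂ)
    (γ : ℕ → EuclideanSpace ℝ (Fin d)) : fourierStieltjes f a γ = measureFourier f a γ := by
  ext y
  simp only [fourierStieltjes, measureFourier, diracFourier, fourierChar_apply]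
  congr! 5
  push_cast
  ring

/-- **Local Wiener–Levi theorem for measures without singular components.**
Let `K ⊆ ℂ` be compact and let `h` be real-analytic on an open neighborhood of `K`.
Then for every complex measure `μ = f dx + Σ_n a_n δ_{γ_n}` on `ℝ^d` of finite total
variation without singular component there is a measure `ν = g dx + Σ_n b_n δ_{ρ_n}` of
finite total variation without singular component such that `ν̂(y) = h(μ̂(y))` whenever
`μ̂(y) ∈ K`. -/
theorem wiener_levi_local_measures {d : ℕ}
    (K : Set ℂ) (hK : IsCompact K)
    (h : ℂ → ℂ) (V : Set ℂ) (hV : IsOpen V) (hKV : K ⊆ V)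
    (hh : AnalyticOnNhd ℝ h V)
    (f : EuclideanSpace ℝ (Fin d) → ℂ) (hf : Integrable f)
    (a : ℕ → ℂ) (ha : Summable fun n => ‖a n‖)
    (γ : ℕ → EuclideanSpace ℝ (Fin d)) :
    ∃ (g : EuclideanSpace ℝ (Fin d) → ℂ) (b : ℕ → ℂ) (ρ : ℕ → EuclideanSpace ℝ (Fin d)),
      Integrable g ∧ Summable (fun n => ‖b n‖) ∧
      ∀ y : EuclideanSpace ℝ (Fin d), measureFourier f a γ y ∈ K →
        measureFourier g b ρ y = h (measureFourier f a γ y) := by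
  simp only [← fourierStieltjes_eq_measureFourier]
  exact wiener_levi_local_measures_general hK.isClosed (hh.mono hKV) hf ha γ
end
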